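/- arXiv:1410.5039 — 4 statements merged into one kernel-verified Lean document; each statement's English description precedes it below -/
import Mathlib

section
/- Let α be a cylindric partition and t a nonnegative integer. Then the number of marble games of length t whose initial arrangement is Arr(α) equals the number of marble games of length t whose final arrangement is Arr(α) (both collections are finite). Moreover, the same equality holds when both collections are restricted to games in which exactly one marble changes hands on every turn (i.e. every turn (t₀, …, t_{k−1}) satisfies Σ_i t_i = 1). -/
namespace CylCount

/-- A cylindric partition on the cylinder `C_{k,n}`: a weakly decreasing
function `ℤ → ℤ` with `f m = f (m + k) + (n - k)`. -/
structure CylPar (k n : ℕ) where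
  f : ℤ → ℤ
  antitone' : ∀ ⦃i j : ℤ⦄, i ≤ j → f j ≤ f i
  periodic' : ∀ m : ℤ, f m = f (m + k) + ((n : ℤ) - k)

/-- A turn from the arrangement `a`: a (k-periodic) assignment of numbers of
marbles passed, each person passing at most as many marbles as they have. -/
def TurnValid (k : ℕ) (a t : ℤ → ℕ) : Prop :=
  (∀ i : ℤ, t (i + k) = t i) ∧ ∀ i : ℤ, t i ≤ a i

/-- The arrangement produced by performing the turn `t` from arrangement `a`:
person `i` passes `t i` marbles to person `i+1`. -/
def nextArr (a t : ℤ → ℕ) : ℤ → ℕ := fun i => a i - t i + t (i - 1)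

/-- The arrangement after the first `j` turns of the sequence `T`, starting
from `a₀`. -/
def arrAfter (a₀ : ℤ → ℕ) (T : ℕ → ℤ → ℕ) : ℕ → (ℤ → ℕ)
  | 0 => a₀
  | j + 1 => nextArr (arrAfter a₀ T j) (T j)

/-- `a` is an arrangement of the `n - k` marbles among the `k` people. -/
def IsArrangement (k n : ℕ) (a : ℤ → ℕ) : Prop :=
  (∀ i : ℤ, a (i + k) = a i) ∧ ∑ i ∈ Finset.range k, a (i : ℤ) = n - k

/-- The marble arrangement of a cylindric partition `α`:
person `i` has `α(i-1) - α(i)` marbles. -/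
def Arr {k n : ℕ} (α : CylPar k n) : ℤ → ℕ := fun i => (α.f (i - 1) - α.f i).toNat

/-- Marble games of length `t` with initial arrangement `Arr(α)` (turns padded
by zero beyond `t` for canonicity). -/
def StartGames (k n : ℕ) (α : CylPar k n) (t : ℕ) : Type :=
  {T : ℕ → ℤ → ℕ //
    (∀ j < t, TurnValid k (arrAfter (Arr α) T j) (T j)) ∧ ∀ j ≥ t, T j = fun _ => 0}

/-- Marble games of length `t` (an initial arrangement together with `t`
successive valid turns) whose final arrangement is `Arr(α)`. -/
def EndGames (k n : ℕ) (α : CylPar k n) (t : ℕ) : Type :=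
  {p : (ℤ → ℕ) × (ℕ → ℤ → ℕ) //
    IsArrangement k n p.1 ∧
    (∀ j < t, TurnValid k (arrAfter p.1 p.2 j) (p.2 j)) ∧
    (∀ j ≥ t, p.2 j = fun _ => 0) ∧
    arrAfter p.1 p.2 t = Arr α}

/-- As `StartGames`, restricted to games in which exactly one marble changes
hands on every turn. -/
def StartGames1 (k n : ℕ) (α : CylPar k n) (t : ℕ) : Type :=
  {T : ℕ → ℤ → ℕ //
    (∀ j < t, TurnValid k (arrAfter (Arr α) T j) (T j)) ∧
    (∀ j ≥ t, T j = fun _ => 0) ∧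
    ∀ j < t, ∑ i ∈ Finset.range k, T j (i : ℤ) = 1}

/-- As `EndGames`, restricted to games in which exactly one marble changes
hands on every turn. -/
def EndGames1 (k n : ℕ) (α : CylPar k n) (t : ℕ) : Type :=
  {p : (ℤ → ℕ) × (ℕ → ℤ → ℕ) //
    IsArrangement k n p.1 ∧
    (∀ j < t, TurnValid k (arrAfter p.1 p.2 j) (p.2 j)) ∧
    (∀ j ≥ t, p.2 j = fun _ => 0) ∧
    arrAfter p.1 p.2 t = Arr α ∧
    ∀ j < t, ∑ i ∈ Finset.range k, p.2 j (i : ℤ) = 1}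

end CylCount

open CylCount

namespace CylCount

/-- Sum of a turn over one period. -/
def psum (k : ℕ) (u : ℤ → ℕ) : ℕ := ∑ i ∈ Finset.range k, u (i : ℤ)

def Per (k : ℕ) (u : ℤ → ℕ) : Prop := ∀ i : ℤ, u (i + k) = u i

theorem per_emod {k : ℕ} {u : ℤ → ℕ} (h : Per k u) (i : ℤ) : u (i % k) = u i := by
  have h' : Function.Periodic u (k : ℤ) := h
  have := h'.sub_zsmul_eq (i / k) (x := i)
  rw [← this]
  congr 1
  have := Int.emod_add_mul_ediv i k
  simp only [smul_eq_mul]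
  linarith [mul_comm (k : ℤ) (i / k)]

theorem per_finite {k : ℕ} (hk : 0 < k) (N : ℕ) : Finite {u : ℤ → ℕ // Per k u ∧ ∀ i, u i ≤ N} := by
  apply Finite.of_injective
    (fun u => (fun i => ⟨u.1 (i : ℕ), Nat.lt_succ_of_le (u.2.2 _)⟩ : Fin k → Fin (N + 1)))
  intro u v huv
  apply Subtype.ext
  funext i
  rw [← per_emod u.2.1 i, ← per_emod v.2.1 i]
  have hk' : (0 : ℤ) < k := by exact_mod_cast hk
  have h0 := Int.emod_nonneg i hk'.ne'
  have h1 := Int.emod_lt_of_pos i hk'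
  have := congrFun huv ⟨(i % k).toNat, by omega⟩
  simp only [Fin.mk.injEq] at this
  rwa [Int.toNat_of_nonneg h0] at this

theorem psum_shift {k : ℕ} {u : ℤ → ℕ} (h : Per k u) : psum k (fun i => u (i + 1)) = psum k u := by
  unfold psum
  have h1 := Finset.sum_range_succ (fun i : ℕ => u (i : ℤ)) k
  have h2 := Finset.sum_range_succ' (fun i : ℕ => u (i : ℤ)) k
  have h3 := h 0
  simp only [zero_add] at h3
  push_cast at h1 h2
  simp only
  omega

theorem per_comp {k : ℕ} {u : ℤ → ℕ} (h : Per k u) (c : ℤ) : Per k (fun i => u (i + c)) := by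
  intro i
  have := h (i + c)
  rw [add_right_comm] at this
  exact this

theorem psum_shift' {k : ℕ} {u : ℤ → ℕ} (h : Per k u) : psum k (fun i => u (i - 1)) = psum k u := by
  have h1 : Per k (fun i => u (i - 1)) := per_comp h (-1)
  rw [← psum_shift h1]
  simp

theorem psum_lin {k : ℕ} {u v w x : ℤ → ℕ} (h : ∀ i, u i + v i = w i + x i) :
    psum k u + psum k v = psum k w + psum k x := by
  unfold psum
  rw [← Finset.sum_add_distrib, ← Finset.sum_add_distrib]
  exact Finset.sum_congr rfl fun i _ => h i

theorem per_sub {k : ℕ} {u : ℤ → ℕ} (h : Per k u) (i : ℤ) : u (i + k - 1) = u (i - 1) := by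
  rw [← h (i - 1)]
  congr 1
  ring

theorem per_add {k : ℕ} {u : ℤ → ℕ} (h : Per k u) (i : ℤ) : u (i + k + 1) = u (i + 1) := by
  rw [← h (i + 1)]
  congr 1
  ring

/-- Inverse move. -/
def prevArr (a t : ℤ → ℕ) : ℤ → ℕ := fun i => a i - t (i - 1) + t i

def ArrSet (k n : ℕ) : Set (ℤ → ℕ) := {a | IsArrangement k n a}

theorem next_mem {k n : ℕ} {a u : ℤ → ℕ} (ha : a ∈ ArrSet k n) (hu : TurnValid k a u) :
    nextArr a u ∈ ArrSet k n := by
  refine ⟨fun i => ?_, ?_⟩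
  · simp only [nextArr, ha.1 i, hu.1 i, per_sub hu.1]
  · have h1 : psum k (nextArr a u) + psum k u = psum k a + psum k (fun i => u (i - 1)) := by
      apply psum_lin
      intro i
      have := hu.2 i
      simp only [nextArr]
      omega
    rw [psum_shift' hu.1] at h1
    have h2 : psum k a = n - k := ha.2
    change psum k _ = _
    omega

/-- valid backward turn -/
def BackValid (k : ℕ) (a t : ℤ → ℕ) : Prop := Per k t ∧ ∀ i : ℤ, t (i - 1) ≤ a i

theorem prev_mem {k n : ℕ} {a u : ℤ → ℕ} (ha : a ∈ ArrSet k n) (hu : BackValid k a u) :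
    prevArr a u ∈ ArrSet k n := by
  refine ⟨fun i => ?_, ?_⟩
  · simp only [prevArr, ha.1 i, hu.1 i, per_sub hu.1]
  · have h1 : psum k (prevArr a u) + psum k (fun i => u (i - 1)) = psum k a + psum k u := by
      apply psum_lin
      intro i
      have := hu.2 i
      simp only [prevArr]
      omega
    rw [psum_shift' hu.1] at h1
    have h2 : psum k a = n - k := ha.2
    change psum k _ = _
    omega

theorem arr_le {k n : ℕ} (hk : 0 < k) {a : ℤ → ℕ} (ha : a ∈ ArrSet k n) (i : ℤ) : a i ≤ n - k := by
  rw [← per_emod ha.1 i, ← ha.2]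
  have hk' : (0 : ℤ) < k := by exact_mod_cast hk
  have h0 := Int.emod_nonneg i hk'.ne'
  have h1 := Int.emod_lt_of_pos i hk'
  have := Finset.single_le_sum (f := fun i : ℕ => a (i : ℤ)) (fun _ _ => Nat.zero_le _)
    (Finset.mem_range.2 (show (i % k).toNat < k by omega))
  simpa only [Int.toNat_of_nonneg h0] using this

theorem arr_finite {k : ℕ} (hk : 0 < k) (n : ℕ) : Finite (ArrSet k n) := by
  have := per_finite hk (n - k)
  exact Finite.of_injective
    (fun a : ArrSet k n => (⟨a.1, a.2.1, arr_le hk a.2⟩ : {u : ℤ → ℕ // Per k u ∧ ∀ i, u i ≤ n - k}))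
    (fun a b h => Subtype.ext (by simpa using h))

/-- Turns from `a` to `c`. -/
def Turn (k : ℕ) (P : ℕ → Prop) (a c : ℤ → ℕ) : Type :=
  {u : ℤ → ℕ // (TurnValid k a u ∧ P (psum k u)) ∧ nextArr a u = c}

theorem turn_finite {k n : ℕ} (hk : 0 < k) (P : ℕ → Prop) {a : ℤ → ℕ} (ha : a ∈ ArrSet k n)
    (c : ℤ → ℕ) : Finite (Turn k P a c) := by
  have := per_finite hk (n - k)
  exact Finite.of_injective
    (fun u : Turn k P a c => (⟨u.1, u.2.1.1.1, fun i => (u.2.1.1.2 i).trans (arr_le hk ha i)⟩ :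
      {u : ℤ → ℕ // Per k u ∧ ∀ i, u i ≤ n - k}))
    (fun a b h => Subtype.ext (by simpa using h))

theorem turn_iff {k : ℕ} {P : ℕ → Prop} {a c u : ℤ → ℕ} :
    ((TurnValid k c u ∧ P (psum k u)) ∧ nextArr c u = a) ↔
    ((BackValid k a u ∧ P (psum k u)) ∧ prevArr a u = c) := by
  constructor
  · rintro ⟨⟨⟨h1, h2⟩, h3⟩, rfl⟩
    refine ⟨⟨⟨h1, fun i => ?_⟩, h3⟩, ?_⟩
    · simp only [nextArr]; omega
    · funext i
      have := h2 i
      simp only [nextArr, prevArr]; omega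
  · rintro ⟨⟨⟨h1, h2⟩, h3⟩, rfl⟩
    refine ⟨⟨⟨h1, fun i => ?_⟩, h3⟩, ?_⟩
    · simp only [prevArr]; omega
    · funext i
      have := h2 i
      simp only [nextArr, prevArr]; omega

def turnEquiv (k : ℕ) (P : ℕ → Prop) (a c : ℤ → ℕ) :
    Turn k P c a ≃ {u : ℤ → ℕ // (BackValid k a u ∧ P (psum k u)) ∧ prevArr a u = c} :=
  Equiv.subtypeEquivRight fun _ => turn_iff

def fib {X Y : Type} (S : Set Y) (p : X → Prop) (f : X → Y) (h : ∀ x, p x → f x ∈ S) :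
    {x // p x} ≃ Σ c : S, {x // p x ∧ f x = c} where
  toFun x := ⟨⟨f x.1, h _ x.2⟩, x.1, x.2, rfl⟩
  invFun y := ⟨y.2.1, y.2.2.1⟩
  left_inv _ := rfl
  right_inv := by
    rintro ⟨⟨c, hc⟩, x, hx, hxc⟩
    obtain rfl : f x = c := hxc
    rfl

def prodFib {X Y : Type} (p q : X → Prop) (f g : X → Y) (c : Y) :
    {x : X × X // (p x.1 ∧ q x.2 ∧ f x.1 = g x.2) ∧ f x.1 = c} ≃
      {x // p x ∧ f x = c} × {x // q x ∧ g x = c} where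
  toFun x := (⟨x.1.1, x.2.1.1, x.2.2⟩, ⟨x.1.2, x.2.1.2.1, x.2.1.2.2.symm.trans x.2.2⟩)
  invFun y := ⟨(y.1.1, y.2.1), ⟨y.1.2.1, y.2.2.1, y.1.2.2.trans y.2.2.2.symm⟩, y.1.2.2⟩
  left_inv _ := rfl
  right_inv _ := rfl

/-- Local move (forward pair to backward pair). -/
def mv (t s : ℤ → ℕ) : ℤ → ℕ := fun j => s j - min (t j) (s j) + min (t (j + 1)) (s (j + 1))

def mvInv (t s : ℤ → ℕ) : ℤ → ℕ := fun j => s j - min (t j) (s j) + min (t (j - 1)) (s (j - 1))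

theorem psum_mv {k : ℕ} {t s : ℤ → ℕ} (ht : Per k t) (hs : Per k s) :
    psum k (mv t s) = psum k s := by
  have hm : Per k (fun j => min (t j) (s j)) := fun i => by simp only [ht i, hs i]
  have h1 : psum k (mv t s) + psum k (fun j => min (t j) (s j)) =
      psum k s + psum k (fun j => min (t (j + 1)) (s (j + 1))) := by
    apply psum_lin
    intro i
    simp only [mv]
    omega
  have := psum_shift hm
  omega

theorem psum_mvInv {k : ℕ} {t s : ℤ → ℕ} (ht : Per k t) (hs : Per k s) :
    psum k (mvInv t s) = psum k s := by
  have hm : Per k (fun j => min (t j) (s j)) := fun i => by simp only [ht i, hs i]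
  have h1 : psum k (mvInv t s) + psum k (fun j => min (t j) (s j)) =
      psum k s + psum k (fun j => min (t (j - 1)) (s (j - 1))) := by
    apply psum_lin
    intro i
    simp only [mvInv]
    omega
  have := psum_shift' hm
  omega

theorem mv_per {k : ℕ} {t s : ℤ → ℕ} (ht : Per k t) (hs : Per k s) : Per k (mv t s) := fun i => by
  simp only [mv, ht i, hs i, per_add ht, per_add hs]

theorem mvInv_per {k : ℕ} {t s : ℤ → ℕ} (ht : Per k t) (hs : Per k s) : Per k (mvInv t s) :=
  fun i => by simp only [mvInv, ht i, hs i, per_sub ht, per_sub hs]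

theorem mv_inv (t s : ℤ → ℕ) : mvInv (mv t s) (mv s t) = t := by
  funext i
  simp only [mv, mvInv, sub_add_cancel]
  omega

theorem inv_mv (t s : ℤ → ℕ) : mv (mvInv t s) (mvInv s t) = t := by
  funext i
  simp only [mv, mvInv, add_sub_cancel_right]
  omega

theorem arith1 (a b t s t' s' m : ℕ) (h1 : t ≤ a) (h2 : s ≤ b)
    (h3 : a - t + t' = b - s + s') :
    a - (s' - min t' s' + min t s) + (s - min t s + m) =
      b - (t' - min s' t' + min s t) + (t - min s t + m) := by
  rcases le_total t s with h | h <;> rcases le_total t' s' with h' | h' <;>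
    simp only [min_eq_left, min_eq_right, h, h'] <;> omega

theorem arith2 (a b t s t' s' m : ℕ) (h1 : t' ≤ a) (h2 : s' ≤ b)
    (h3 : a - t' + t = b - s' + s) :
    a - (s - min t s + min t' s') + (s' - min t' s' + m) =
      b - (t - min s t + min s' t') + (t' - min s' t' + m) := by
  rcases le_total t s with h | h <;> rcases le_total t' s' with h' | h' <;>
    simp only [min_eq_left, min_eq_right, h, h'] <;> omega

def commEquiv (k : ℕ) (P : ℕ → Prop) (a b : ℤ → ℕ) :
    {x : (ℤ → ℕ) × (ℤ → ℕ) // (TurnValid k a x.1 ∧ P (psum k x.1)) ∧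
      (TurnValid k b x.2 ∧ P (psum k x.2)) ∧ nextArr a x.1 = nextArr b x.2} ≃
    {x : (ℤ → ℕ) × (ℤ → ℕ) // (BackValid k a x.1 ∧ P (psum k x.1)) ∧
      (BackValid k b x.2 ∧ P (psum k x.2)) ∧ prevArr a x.1 = prevArr b x.2} where
  toFun x := ⟨(mv x.1.1 x.1.2, mv x.1.2 x.1.1), by
    obtain ⟨⟨t, s⟩, ⟨⟨ht, hta⟩, hPt⟩, ⟨⟨hs, hsb⟩, hPs⟩, he⟩ := x
    have he' : ∀ i, nextArr a t i = nextArr b s i := fun i => congrFun he i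
    simp only [nextArr] at he'
    refine ⟨⟨⟨mv_per ht hs, fun i => ?_⟩, ?_⟩, ⟨⟨mv_per hs ht, fun i => ?_⟩, ?_⟩, ?_⟩
    · have := hta i; have := hsb i; have := he' i
      simp only [mv, sub_add_cancel] at *
      omega
    · simpa only [psum_mv ht hs] using hPs
    · have := hta i; have := hsb i; have := he' i
      simp only [mv, sub_add_cancel] at *
      omega
    · simpa only [psum_mv hs ht] using hPt
    · funext i
      have := hta i; have := hsb i; have := he' i
      simp only [prevArr, mv, sub_add_cancel]
      rw [min_comm (s (i + 1)) (t (i + 1))]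
      exact arith1 _ _ _ _ _ _ _ (by assumption) (by assumption) (by assumption)⟩
  invFun x := ⟨(mvInv x.1.1 x.1.2, mvInv x.1.2 x.1.1), by
    obtain ⟨⟨t, s⟩, ⟨⟨ht, hta⟩, hPt⟩, ⟨⟨hs, hsb⟩, hPs⟩, he⟩ := x
    have he' : ∀ i, prevArr a t i = prevArr b s i := fun i => congrFun he i
    simp only [prevArr] at he'
    refine ⟨⟨⟨mvInv_per ht hs, fun i => ?_⟩, ?_⟩, ⟨⟨mvInv_per hs ht, fun i => ?_⟩, ?_⟩, ?_⟩
    · have := hta i; have := hsb i; have := he' i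
      simp only [mvInv] at *
      omega
    · simpa only [psum_mvInv ht hs] using hPs
    · have := hta i; have := hsb i; have := he' i
      simp only [mvInv] at *
      omega
    · simpa only [psum_mvInv hs ht] using hPt
    · funext i
      have := hta i; have := hsb i; have := he' i
      simp only [nextArr, mvInv]
      rw [min_comm (s (i - 1 - 1)) (t (i - 1 - 1))]
      exact arith2 _ _ _ _ _ _ _ (by assumption) (by assumption) (by assumption)⟩
  left_inv x := by
    apply Subtype.ext
    exact Prod.ext (mv_inv _ _) (mv_inv _ _)
  right_inv x := by
    apply Subtype.ext
    exact Prod.ext (inv_mv _ _) (inv_mv _ _)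

def shiftEquiv (k : ℕ) (P : ℕ → Prop) (a : ℤ → ℕ) :
    {u : ℤ → ℕ // TurnValid k a u ∧ P (psum k u)} ≃
    {u : ℤ → ℕ // BackValid k a u ∧ P (psum k u)} where
  toFun u := ⟨fun i => u.1 (i + 1), ⟨per_comp u.2.1.1 1, fun i => by
    simpa using u.2.1.2 i⟩, by rw [psum_shift u.2.1.1]; exact u.2.2⟩
  invFun u := ⟨fun i => u.1 (i - 1), ⟨per_comp u.2.1.1 (-1), u.2.1.2⟩, by
    rw [psum_shift' u.2.1.1]; exact u.2.2⟩
  left_inv u := by apply Subtype.ext; funext i; simp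
  right_inv u := by apply Subtype.ext; funext i; simp

/-- Games from `a` to `b`. -/
def GameProp (k : ℕ) (P : ℕ → Prop) (t : ℕ) (a : ℤ → ℕ) (T : ℕ → ℤ → ℕ) : Prop :=
  (∀ j < t, TurnValid k (arrAfter a T j) (T j) ∧ P (psum k (T j))) ∧ ∀ j ≥ t, T j = fun _ => 0

def Game (k : ℕ) (P : ℕ → Prop) (t : ℕ) (a b : ℤ → ℕ) : Type :=
  {T : ℕ → ℤ → ℕ // GameProp k P t a T ∧ arrAfter a T t = b}

theorem arrAfter_succ (a : ℤ → ℕ) (T : ℕ → ℤ → ℕ) (j : ℕ) :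
    arrAfter a T (j + 1) = arrAfter (nextArr a (T 0)) (fun i => T (i + 1)) j := by
  induction j with
  | zero => rfl
  | succ j ih => rw [arrAfter, ih]; rfl

theorem arrAfter_mem {k n : ℕ} {P : ℕ → Prop} {a : ℤ → ℕ} (ha : a ∈ ArrSet k n) {t : ℕ}
    {T : ℕ → ℤ → ℕ} (h : GameProp k P t a T) : ∀ j ≤ t, arrAfter a T j ∈ ArrSet k n := by
  intro j
  induction j with
  | zero => exact fun _ => ha
  | succ j ih => exact fun hj => next_mem (ih (by omega)) (h.1 j hj).1

theorem gameProp_succ {k : ℕ} {P : ℕ → Prop} {a : ℤ → ℕ} {t : ℕ} {T : ℕ → ℤ → ℕ} :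
    GameProp k P (t + 1) a T ↔ (TurnValid k a (T 0) ∧ P (psum k (T 0))) ∧
      GameProp k P t (nextArr a (T 0)) (fun i => T (i + 1)) := by
  constructor
  · rintro ⟨h1, h2⟩
    refine ⟨h1 0 (by omega), fun j hj => ?_, fun j hj => h2 (j + 1) (by omega)⟩
    rw [← arrAfter_succ]
    exact h1 (j + 1) (by omega)
  · rintro ⟨h0, h1, h2⟩
    refine ⟨fun j hj => ?_, fun j hj => ?_⟩
    · cases j with
      | zero => exact h0
      | succ j => rw [arrAfter_succ]; exact h1 j (by omega)
    · cases j with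
      | zero => omega
      | succ j => exact h2 j (by omega)

def consT (u : ℤ → ℕ) (T : ℕ → ℤ → ℕ) : ℕ → ℤ → ℕ
  | 0 => u
  | j + 1 => T j

def gameSucc {k n : ℕ} (P : ℕ → Prop) {a : ℤ → ℕ} (ha : a ∈ ArrSet k n) (t : ℕ) (b : ℤ → ℕ) :
    Game k P (t + 1) a b ≃ Σ c : ArrSet k n, Turn k P a c × Game k P t c b :=
  (fib (ArrSet k n) (fun T => GameProp k P (t + 1) a T ∧ arrAfter a T (t + 1) = b)
    (fun T => nextArr a (T 0)) (fun _ hT => next_mem ha (gameProp_succ.1 hT.1).1.1)).trans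
  (Equiv.sigmaCongrRight fun c =>
    { toFun := fun T => (⟨T.1 0, (gameProp_succ.1 T.2.1.1).1, T.2.2⟩,
        ⟨fun i => T.1 (i + 1), by
          obtain ⟨T, ⟨h1, h2⟩, h3⟩ := T
          rw [arrAfter_succ] at h2
          simp only at h3 ⊢
          rw [← h3]
          exact ⟨(gameProp_succ.1 h1).2, h2⟩⟩)
      invFun := fun y => ⟨consT y.1.1 y.2.1, by
        obtain ⟨⟨u, hu, huc⟩, T, hT, hTb⟩ := y
        refine ⟨⟨gameProp_succ.2 ⟨hu, ?_⟩, ?_⟩, huc⟩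
        · change GameProp k P t (nextArr a u) T
          rw [huc]; exact hT
        · rw [arrAfter_succ]
          change arrAfter (nextArr a u) T t = b
          rw [huc]; exact hTb⟩
      left_inv := fun T => by
        apply Subtype.ext
        funext j
        cases j <;> rfl
      right_inv := fun y => rfl })

theorem game_finite {k n : ℕ} (hk : 0 < k) (P : ℕ → Prop) (t : ℕ) (b : ℤ → ℕ) :
    ∀ a ∈ ArrSet k n, Finite (Game k P t a b) := by
  induction t with
  | zero =>
    intro a _
    refine @Finite.of_subsingleton _ ⟨?_⟩
    rintro ⟨T, hT, _⟩ ⟨T', hT', _⟩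
    apply Subtype.ext
    funext j
    exact (hT.2 j (Nat.zero_le _)).trans (hT'.2 j (Nat.zero_le _)).symm
  | succ t ih =>
    intro a ha
    have := arr_finite hk n
    have h1 : ∀ c : ArrSet k n, Finite (Turn k P a c) := fun c => turn_finite hk P ha c
    have h2 : ∀ c : ArrSet k n, Finite (Game k P t c b) := fun c => ih c c.2
    exact Finite.of_equiv _ (gameSucc P ha t b).symm

open Classical in
theorem main {k n : ℕ} (hk : 0 < k) (P : ℕ → Prop) (t : ℕ) (a : ArrSet k n) :
    Nat.card (Σ b : ArrSet k n, Game k P t a b) = Nat.card (Σ b : ArrSet k n, Game k P t b a) := by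
  have := arr_finite hk n
  have hft : ∀ c d : ArrSet k n, Finite (Turn k P c d) := fun c d => turn_finite hk P c.2 d
  have hfg : ∀ (t : ℕ) (c d : ArrSet k n), Finite (Game k P t c d) :=
    fun t c d => game_finite hk P t d c c.2
  let _ : Fintype (ArrSet k n) := Fintype.ofFinite _
  let M : Matrix (ArrSet k n) (ArrSet k n) ℕ := fun a b => Nat.card (Turn k P a b)
  have hpow : ∀ (t : ℕ) (a b : ArrSet k n), Nat.card (Game k P t a b) = (M ^ t) a b := by
    intro t
    induction t with
    | zero =>
      intro a b
      rw [pow_zero, Matrix.one_apply]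
      split_ifs with h
      · subst h
        rw [Nat.card_eq_one_iff_unique]
        refine ⟨⟨?_⟩, ⟨⟨fun _ _ => 0, ⟨fun j hj => by omega, fun _ _ => rfl⟩, rfl⟩⟩⟩
        rintro ⟨T, hT, _⟩ ⟨T', hT', _⟩
        apply Subtype.ext
        funext j
        exact (hT.2 j (Nat.zero_le _)).trans (hT'.2 j (Nat.zero_le _)).symm
      · have : IsEmpty (Game k P 0 a b) := ⟨fun T => h (Subtype.ext T.2.2)⟩
        exact Nat.card_of_isEmpty
    | succ t ih =>
      intro a b
      rw [Nat.card_congr (gameSucc P a.2 t b), Nat.card_sigma, pow_succ', Matrix.mul_apply]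
      refine Finset.sum_congr rfl fun c _ => ?_
      rw [Nat.card_prod, ih]
  have hcomm : Commute M M.transpose := by
    ext a b
    rw [Matrix.mul_apply, Matrix.mul_apply]
    change ∑ c : ArrSet k n, Nat.card (Turn k P a c) * Nat.card (Turn k P b c) =
      ∑ c : ArrSet k n, Nat.card (Turn k P c a) * Nat.card (Turn k P c b)
    simp only [← Nat.card_prod]
    rw [← Nat.card_sigma, ← Nat.card_sigma]
    refine Nat.card_congr ?_
    refine (((fib (ArrSet k n) _ (fun x => nextArr a x.1) (fun x hx => next_mem a.2 hx.1.1)).trans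
      (Equiv.sigmaCongrRight fun c => prodFib (fun u => TurnValid k a u ∧ P (psum k u))
        (fun u => TurnValid k b u ∧ P (psum k u)) (nextArr a) (nextArr b) c)).symm.trans
      (commEquiv k P a b)).trans ?_
    exact (fib (ArrSet k n) _ (fun x => prevArr a x.1) (fun x hx => prev_mem a.2 hx.1.1)).trans
      (Equiv.sigmaCongrRight fun c => (prodFib (fun u => BackValid k a u ∧ P (psum k u))
        (fun u => BackValid k b u ∧ P (psum k u)) (prevArr a) (prevArr b) c).trans
        (Equiv.prodCongr (turnEquiv k P a c).symm (turnEquiv k P b c).symm))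
  have hone : Matrix.mulVec M 1 = Matrix.mulVec M.transpose 1 := by
    ext a
    simp only [Matrix.mulVec, dotProduct, Pi.one_apply, mul_one]
    change ∑ c : ArrSet k n, Nat.card (Turn k P a c) = ∑ c : ArrSet k n, Nat.card (Turn k P c a)
    rw [← Nat.card_sigma, ← Nat.card_sigma]
    refine Nat.card_congr ?_
    refine ((fib (ArrSet k n) _ (fun x => nextArr a x) (fun x hx => next_mem a.2 hx.1)).symm.trans
      (shiftEquiv k P a)).trans ?_
    exact (fib (ArrSet k n) _ (fun x => prevArr a x) (fun x hx => prev_mem a.2 hx.1)).trans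
      (Equiv.sigmaCongrRight fun c => (turnEquiv k P a c).symm)
  have hmain : ∀ t : ℕ, Matrix.mulVec (M ^ t) 1 = Matrix.mulVec (M.transpose ^ t) 1 := by
    intro t
    induction t with
    | zero => simp
    | succ t ih =>
      rw [pow_succ', ← Matrix.mulVec_mulVec, ih, Matrix.mulVec_mulVec,
        (hcomm.pow_right t).eq, ← Matrix.mulVec_mulVec, hone, Matrix.mulVec_mulVec, ← pow_succ]
  rw [Nat.card_sigma, Nat.card_sigma]
  have := congrFun (hmain t) a
  rw [← Matrix.transpose_pow] at this
  simp only [hpow]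
  simpa [Matrix.mulVec, dotProduct] using this

theorem arr_mem {k n : ℕ} (hkn : k < n) (α : CylPar k n) : Arr α ∈ ArrSet k n := by
  refine ⟨fun i => ?_, ?_⟩
  · simp only [Arr]
    have h1 := α.periodic' i
    have h2 := α.periodic' (i - 1)
    rw [show i - 1 + (k : ℤ) = i + k - 1 by ring] at h2
    congr 1
    omega
  · have key : ∀ m : ℕ, ((∑ i ∈ Finset.range m, Arr α (i : ℤ) : ℕ) : ℤ) =
        α.f (-1) - α.f ((m : ℤ) - 1) := by
      intro m
      induction m with
      | zero => simp
      | succ m ih =>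
        rw [Finset.sum_range_succ]
        push_cast
        push_cast at ih
        rw [ih]
        have := α.antitone' (show (m : ℤ) - 1 ≤ m by omega)
        simp only [Arr, add_sub_cancel_right]
        omega
    have h1 := key k
    have h2 := α.periodic' (-1)
    rw [show -1 + (k : ℤ) = k - 1 by ring] at h2
    omega

def startEquiv {k n : ℕ} (P : ℕ → Prop) (t : ℕ) {a : ℤ → ℕ} (ha : a ∈ ArrSet k n) :
    {T // GameProp k P t a T} ≃ Σ b : ArrSet k n, Game k P t a b :=
  fib (ArrSet k n) _ (fun T => arrAfter a T t) (fun _ hT => arrAfter_mem ha hT t le_rfl)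

def endEquiv (k n : ℕ) (P : ℕ → Prop) (t : ℕ) (a : ℤ → ℕ) :
    {p : (ℤ → ℕ) × (ℕ → ℤ → ℕ) // p.1 ∈ ArrSet k n ∧ GameProp k P t p.1 p.2 ∧
      arrAfter p.1 p.2 t = a} ≃ Σ b : ArrSet k n, Game k P t b a where
  toFun p := ⟨⟨p.1.1, p.2.1⟩, p.1.2, p.2.2⟩
  invFun y := ⟨(y.1.1, y.2.1), y.1.2, y.2.2⟩
  left_inv _ := rfl
  right_inv _ := rfl

theorem final {k n : ℕ} (hk : 0 < k) (P : ℕ → Prop) (t : ℕ) {a : ℤ → ℕ} (ha : a ∈ ArrSet k n)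
    {S E : Type} (e1 : S ≃ {T // GameProp k P t a T})
    (e2 : E ≃ {p : (ℤ → ℕ) × (ℕ → ℤ → ℕ) // p.1 ∈ ArrSet k n ∧ GameProp k P t p.1 p.2 ∧
      arrAfter p.1 p.2 t = a}) : Finite S ∧ Finite E ∧ Nat.card S = Nat.card E := by
  have := arr_finite hk n
  have hfg : ∀ (c d : ArrSet k n), Finite (Game k P t c d) :=
    fun c d => game_finite hk P t d c c.2
  have h1 : ∀ d : ArrSet k n, Finite (Game k P t a d) := fun d => hfg ⟨a, ha⟩ d
  have h2 : ∀ d : ArrSet k n, Finite (Game k P t d a) := fun d => hfg d ⟨a, ha⟩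
  refine ⟨Finite.of_equiv _ (e1.trans (startEquiv P t ha)).symm,
    Finite.of_equiv _ (e2.trans (endEquiv k n P t a)).symm, ?_⟩
  rw [Nat.card_congr (e1.trans (startEquiv P t ha)), Nat.card_congr (e2.trans (endEquiv k n P t a))]
  exact main hk P t ⟨a, ha⟩

end CylCount

/-- the number of marble games of length `t` with initial
arrangement `Arr(α)` equals the number of marble games of length `t` with
final arrangement `Arr(α)` (both collections are finite); the same holds when
both collections are restricted to games in which exactly one marble changes
hands on every turn. -/
theorem stmt16 (k n : ℕ) (hk : 0 < k) (hkn : k < n) (α : CylPar k n) (t : ℕ) :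
    Finite (StartGames k n α t) ∧ Finite (EndGames k n α t) ∧
    Nat.card (StartGames k n α t) = Nat.card (EndGames k n α t) ∧
    Finite (StartGames1 k n α t) ∧ Finite (EndGames1 k n α t) ∧
    Nat.card (StartGames1 k n α t) = Nat.card (EndGames1 k n α t) := by
  have ha := arr_mem hkn α
  obtain ⟨h1, h2, h3⟩ := final hk (fun _ => True) t ha
    (S := StartGames k n α t) (E := EndGames k n α t)
    (Equiv.subtypeEquivRight fun T => by simp [GameProp])
    (Equiv.subtypeEquivRight fun p => by simp [GameProp, ArrSet, and_assoc])
  obtain ⟨h4, h5, h6⟩ := final hk (fun m => m = 1) t ha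
    (S := StartGames1 k n α t) (E := EndGames1 k n α t)
    (Equiv.subtypeEquivRight fun T => by
      simp only [GameProp, psum, forall_and, imp_and]; tauto)
    (Equiv.subtypeEquivRight fun p => by
      simp only [GameProp, psum, ArrSet, forall_and, imp_and, Set.mem_ofPred_eq]; tauto)
  exact ⟨h1, h2, h3, h4, h5, h6⟩
end

section
/- (Skew Cauchy identity, coefficient form) Let α and β be partitions and let f, g : {1,2,…} → ℕ be finitely supported functions. Then the number of 6-tuples (μ, γ, T, U, V, W), where μ is a partition with μ ⊆ α and μ ⊆ β, γ is a partition, T is an SSYT of shape α/μ, U is an SSYT of shape β/μ, V and W are SSYT of straight shape γ, and wt(T) + wt(V) = f and wt(U) + wt(W) = g, equals the number of triples (λ, P, Q), where λ is a partition with α ⊆ λ and β ⊆ λ, P is an SSYT of shape λ/β with wt(P) = f, and Q is an SSYT of shape λ/α with wt(Q) = g. (This is the coefficient-of-x^f·y^g form of the identity Σ_μ s_{α/μ}(x) s_{β/μ}(y) · Σ_γ s_γ(x) s_γ(y) = Σ_λ s_{λ/β}(x) s_{λ/α}(y).) -/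
namespace SkewYT

/-- A partition: a weakly decreasing function `ℕ → ℕ`, eventually zero
(rows indexed `0, 1, 2, …`). -/
def IsPartition (f : ℕ → ℕ) : Prop :=
  (∀ ⦃i j : ℕ⦄, i ≤ j → f j ≤ f i) ∧ ∃ N, ∀ i ≥ N, f i = 0

/-- A semistandard skew Young tableau of shape `λ/μ`: a map from the cells
`{(i,j) : μ i < j ≤ λ i}` to the positive integers, with weakly increasing
rows and strictly increasing columns. -/
structure SSYT (μ lam : ℕ → ℕ) where
  entry : ∀ i j : ℕ, μ i < j → j ≤ lam i → ℕ+
  row_weak : ∀ i j₁ j₂ h₁ h₂ h₃ h₄, j₁ < j₂ →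
    entry i j₁ h₁ h₂ ≤ entry i j₂ h₃ h₄
  col_strict : ∀ i₁ i₂ j h₁ h₂ h₃ h₄, i₁ < i₂ →
    entry i₁ j h₁ h₂ < entry i₂ j h₃ h₄

/-- The weight of a skew tableau: the number of cells carrying the letter `a`. -/
noncomputable def wtY {μ lam : ℕ → ℕ} (T : SSYT μ lam) (a : ℕ+) : ℕ :=
  Nat.card {p : ℕ × ℕ //
    ∃ (h₁ : μ p.1 < p.2) (h₂ : p.2 ≤ lam p.1), T.entry p.1 p.2 h₁ h₂ = a}

end SkewYT

open SkewYT

namespace SkewYT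

/-- Bundled partitions. -/
abbrev Part := {h : ℕ → ℕ // IsPartition h}

/-- The additive monoid of weights. -/
abbrev Wt := ℕ+ → ℕ

/-- A weighted family of arrows between partitions. -/
structure Arr where
  hom : Part → Part → Type
  wt : ∀ {μ lam : Part}, hom μ lam → Wt

/-- Composition of arrow families; weights add. -/
def Arr.comp (A A' : Arr) : Arr where
  hom μ lam := Σ ν : Part, A.hom μ ν × A'.hom ν lam
  wt x := A.wt x.2.1 + A'.wt x.2.2

/-- A weighted exchange between two families. -/
structure Exch (A B : Arr) where
  K : Type
  rA : K → Wt
  rB : K → Wt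
  e : ∀ α β : Part, (Σ lam : Part, A.hom β lam × B.hom α lam) ≃
    (Σ μ : Part, A.hom μ α × B.hom μ β) × K
  hA : ∀ α β x, A.wt x.2.1 = A.wt (e α β x).1.2.1 + rA (e α β x).2
  hB : ∀ α β x, B.wt x.2.2 = B.wt (e α β x).1.2.2 + rB (e α β x).2

/-- Swap the factors. -/
def sw (X Y : Part → Type) : (Σ l : Part, X l × Y l) ≃ (Σ l : Part, Y l × X l) where
  toFun x := ⟨x.1, x.2.2, x.2.1⟩
  invFun x := ⟨x.1, x.2.2, x.2.1⟩
  left_inv _ := rfl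
  right_inv _ := rfl

def Exch.swap {A B : Arr} (E : Exch A B) : Exch B A where
  K := E.K
  rA := E.rB
  rB := E.rA
  e α β := ((sw _ _).trans (E.e β α)).trans (Equiv.prodCongr (sw _ _) (Equiv.refl _))
  hA α β x := E.hB β α ((sw _ _) x)
  hB α β x := E.hA β α ((sw _ _) x)

def Exch.comp {A A' B : Arr} (E : Exch A B) (E' : Exch A' B) : Exch (A.comp A') B where
  K := E.K × E'.K
  rA k := E.rA k.1 + E'.rA k.2
  rB k := E.rB k.1 + E'.rB k.2
  e α β :=
    let e1 : (Σ lam : Part, (A.comp A').hom β lam × B.hom α lam) ≃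
        (Σ ν : Part, A.hom β ν × (Σ lam : Part, A'.hom ν lam × B.hom α lam)) :=
      { toFun := fun x => ⟨x.2.1.1, x.2.1.2.1, x.1, x.2.1.2.2, x.2.2⟩
        invFun := fun x => ⟨x.2.2.1, ⟨x.1, x.2.1, x.2.2.2.1⟩, x.2.2.2.2⟩
        left_inv := fun _ => rfl
        right_inv := fun _ => rfl }
    let e2 : (Σ ν : Part, A.hom β ν × (Σ lam : Part, A'.hom ν lam × B.hom α lam)) ≃
        (Σ ν : Part, A.hom β ν × ((Σ μ : Part, A'.hom μ α × B.hom μ ν) × E'.K)) :=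
      Equiv.sigmaCongrRight fun ν => Equiv.prodCongr (Equiv.refl _) (E'.e α ν)
    let e3 : (Σ ν : Part, A.hom β ν × ((Σ μ : Part, A'.hom μ α × B.hom μ ν) × E'.K)) ≃
        (Σ μ : Part, A'.hom μ α × (Σ ν : Part, A.hom β ν × B.hom μ ν)) × E'.K :=
      { toFun := fun x => (⟨x.2.2.1.1, x.2.2.1.2.1, x.1, x.2.1, x.2.2.1.2.2⟩, x.2.2.2)
        invFun := fun x => ⟨x.1.2.2.1, x.1.2.2.2.1, ⟨x.1.1, x.1.2.1, x.1.2.2.2.2⟩, x.2⟩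
        left_inv := fun _ => rfl
        right_inv := fun _ => rfl }
    let e4 : (Σ μ : Part, A'.hom μ α × (Σ ν : Part, A.hom β ν × B.hom μ ν)) × E'.K ≃
        (Σ μ : Part, A'.hom μ α × ((Σ κ : Part, A.hom κ μ × B.hom κ β) × E.K)) × E'.K :=
      Equiv.prodCongr
        (Equiv.sigmaCongrRight fun μ => Equiv.prodCongr (Equiv.refl _) (E.e μ β)) (Equiv.refl _)
    let e5 : (Σ μ : Part, A'.hom μ α × ((Σ κ : Part, A.hom κ μ × B.hom κ β) × E.K)) × E'.K ≃
        (Σ κ : Part, (A.comp A').hom κ α × B.hom κ β) × (E.K × E'.K) :=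
      { toFun := fun x =>
          (⟨x.1.2.2.1.1, ⟨x.1.1, x.1.2.2.1.2.1, x.1.2.1⟩, x.1.2.2.1.2.2⟩, x.1.2.2.2, x.2)
        invFun := fun x =>
          (⟨x.1.2.1.1, x.1.2.1.2.2, ⟨x.1.1, x.1.2.1.2.1, x.1.2.2⟩, x.2.1⟩, x.2.2)
        left_inv := fun _ => rfl
        right_inv := fun _ => rfl }
    (((e1.trans e2).trans e3).trans e4).trans e5
  hA α β := by
    rintro ⟨lam, ⟨ν, a, a'⟩, b⟩
    have h' := E'.hA α ν ⟨lam, a', b⟩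
    have h := E.hA (E'.e α ν ⟨lam, a', b⟩).1.1 β ⟨ν, a, (E'.e α ν ⟨lam, a', b⟩).1.2.2⟩
    change A.wt a + A'.wt a' = _
    change A'.wt a' = _ at h'
    change A.wt a = _ at h
    rw [h, h']
    exact add_add_add_comm _ _ _ _
  hB α β := by
    rintro ⟨lam, ⟨ν, a, a'⟩, b⟩
    have h' := E'.hB α ν ⟨lam, a', b⟩
    have h := E.hB (E'.e α ν ⟨lam, a', b⟩).1.1 β ⟨ν, a, (E'.e α ν ⟨lam, a', b⟩).1.2.2⟩
    change B.wt b = _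
    change B.wt b = _ at h'
    change B.wt (E'.e α ν ⟨lam, a', b⟩).1.2.2 = _ at h
    rw [h', h]
    exact add_assoc _ _ _

/-- Transport along a weight preserving equivalence. -/
def Exch.congr {A A' B : Arr} (E : Exch A B) (i : ∀ μ lam, A'.hom μ lam ≃ A.hom μ lam)
    (hi : ∀ μ lam x, A.wt (i μ lam x) = A'.wt x) : Exch A' B where
  K := E.K
  rA := E.rA
  rB := E.rB
  e α β := ((Equiv.sigmaCongrRight fun lam => Equiv.prodCongr (i β lam) (Equiv.refl _)).trans
    (E.e α β)).trans (Equiv.prodCongr (Equiv.sigmaCongrRight fun μ =>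
      Equiv.prodCongr (i μ α).symm (Equiv.refl _)) (Equiv.refl _))
  hA α β := by
    rintro ⟨lam, a, b⟩
    have h := E.hA α β ⟨lam, i _ _ a, b⟩
    change A.wt (i _ _ a) = _ at h
    rw [hi] at h
    have h2 : A'.wt ((i _ α).symm (E.e α β ⟨lam, i _ _ a, b⟩).1.2.1) =
        A.wt (E.e α β ⟨lam, i _ _ a, b⟩).1.2.1 := by
      rw [← hi, Equiv.apply_symm_apply]
    rw [← h2] at h
    exact h
  hB α β := by
    rintro ⟨lam, a, b⟩
    exact E.hB α β ⟨lam, i _ _ a, b⟩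

/-- Horizontal strips. -/
def HS (μ lam : Part) : Prop := ∀ i, μ.1 i ≤ lam.1 i ∧ lam.1 (i + 1) ≤ μ.1 i

/-- Size difference. -/
noncomputable def dsz (μ lam : ℕ → ℕ) : ℕ :=
  Nat.card {p : ℕ × ℕ // μ p.1 < p.2 ∧ p.2 ≤ lam p.1}

theorem cells_eq (μ lam : ℕ → ℕ) (N : ℕ) (hN : ∀ i ≥ N, lam i = 0) :
    {p : ℕ × ℕ | μ p.1 < p.2 ∧ p.2 ≤ lam p.1} =
      (((Finset.range N).sigma fun i => Finset.Ioc (μ i) (lam i)).map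
        (Equiv.sigmaEquivProd ℕ ℕ).toEmbedding : Finset (ℕ × ℕ)) := by
  ext ⟨i, j⟩
  simp only [Set.mem_ofPred_eq, Finset.coe_map, Set.mem_image, Finset.mem_coe, Finset.mem_sigma,
    Finset.mem_range, Finset.mem_Ioc, Equiv.coe_toEmbedding]
  constructor
  · rintro ⟨h1, h2⟩
    refine ⟨⟨i, j⟩, ⟨?_, h1, h2⟩, rfl⟩
    by_contra h
    have := hN i (not_lt.mp h)
    omega
  · rintro ⟨⟨a, b⟩, ⟨_, h1, h2⟩, h⟩
    simp only [Equiv.sigmaEquivProd_apply, Prod.mk.injEq] at h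
    obtain ⟨rfl, rfl⟩ := h
    exact ⟨h1, h2⟩

theorem cells_finite (μ : ℕ → ℕ) (lam : Part) :
    {p : ℕ × ℕ | μ p.1 < p.2 ∧ p.2 ≤ lam.1 p.1}.Finite := by
  obtain ⟨N, hN⟩ := lam.2.2
  rw [cells_eq μ lam.1 N hN]
  exact Finset.finite_toSet _

theorem dsz_eq (μ lam : ℕ → ℕ) (N : ℕ) (hN : ∀ i ≥ N, lam i = 0) :
    dsz μ lam = ∑ i ∈ Finset.range N, (lam i - μ i) := by
  have h := cells_eq μ lam N hN
  unfold dsz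
  have : Nat.card {p : ℕ × ℕ // μ p.1 < p.2 ∧ p.2 ≤ lam p.1} =
    Set.ncard {p : ℕ × ℕ | μ p.1 < p.2 ∧ p.2 ≤ lam p.1} := rfl
  rw [this, h, Set.ncard_coe_finset, Finset.card_map, Finset.card_sigma]
  simp

theorem dsz_add (μ lam : ℕ → ℕ) (N : ℕ) (hN : ∀ i ≥ N, lam i = 0) (h : ∀ i, μ i ≤ lam i) :
    dsz μ lam + ∑ i ∈ Finset.range N, μ i = ∑ i ∈ Finset.range N, lam i := by
  rw [dsz_eq μ lam N hN, ← Finset.sum_add_distrib]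
  exact Finset.sum_congr rfl fun i _ => Nat.sub_add_cancel (h i)

/-- One-letter arrows. -/
noncomputable def H (a : ℕ+) : Arr where
  hom μ lam := PLift (HS μ lam)
  wt {μ lam} _ := Pi.single a (dsz μ.1 lam.1)

theorem isPartition_of_step {h : ℕ → ℕ} (h1 : ∀ i, h (i + 1) ≤ h i)
    (h2 : ∃ N, ∀ i ≥ N, h i = 0) : IsPartition h :=
  ⟨fun _ _ hij => antitone_nat_of_succ_le h1 hij, h2⟩

theorem dsz_local (α β μ lam : Part) (k : ℕ) (h1 : HS β lam) (h2 : HS α lam) (h3 : HS μ α)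
    (h4 : HS μ β) (h0 : lam.1 0 = max (α.1 0) (β.1 0) + k)
    (hs : ∀ i, lam.1 (i + 1) + μ.1 i = min (α.1 i) (β.1 i) + max (α.1 (i + 1)) (β.1 (i + 1))) :
    dsz β.1 lam.1 = dsz μ.1 α.1 + k := by
  obtain ⟨N1, hN1⟩ := α.2.2
  obtain ⟨N2, hN2⟩ := β.2.2
  obtain ⟨N3, hN3⟩ := lam.2.2
  obtain ⟨N, hN⟩ : ∃ N, N = N1 + N2 + N3 := ⟨_, rfl⟩
  have a1 := dsz_add β.1 lam.1 (N + 1) (fun i hi => hN3 i (by omega)) (fun i => (h1 i).1)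
  have a2 := dsz_add μ.1 α.1 (N + 1) (fun i hi => hN1 i (by omega)) (fun i => (h3 i).1)
  have key : ∀ n, ∑ i ∈ Finset.range (n + 1), lam.1 i + ∑ i ∈ Finset.range n, μ.1 i =
      k + ∑ i ∈ Finset.range n, (α.1 i + β.1 i) + max (α.1 n) (β.1 n) := by
    intro n
    induction n with
    | zero => simp [h0]; omega
    | succ n ih =>
      rw [Finset.sum_range_succ lam.1 (n + 1), Finset.sum_range_succ μ.1 n,
        Finset.sum_range_succ (fun i => α.1 i + β.1 i) n]
      have := hs n
      omega
  have k1 := key N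
  have z1 := hN1 N (by omega)
  have z2 := hN2 N (by omega)
  have z3 := (h3 N).1
  rw [Finset.sum_add_distrib] at k1
  rw [Finset.sum_range_succ β.1] at a1
  rw [Finset.sum_range_succ α.1, Finset.sum_range_succ μ.1] at a2
  omega

/-- inverse local rule -/
def loc (α β lam : Part) : Part :=
  ⟨fun i => min (α.1 i) (β.1 i) + max (α.1 (i + 1)) (β.1 (i + 1)) -
      max (max (α.1 (i + 1)) (β.1 (i + 1))) (min (min (α.1 i) (β.1 i)) (lam.1 (i + 1))), by
    obtain ⟨N1, hN1⟩ := α.2.2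
    obtain ⟨N2, hN2⟩ := β.2.2
    refine isPartition_of_step (fun i => ?_) ⟨N1 + N2, fun i hi => ?_⟩
    · have := α.2.1 (Nat.le_succ i)
      have := β.2.1 (Nat.le_succ i)
      have := α.2.1 (Nat.le_succ (i + 1))
      have := β.2.1 (Nat.le_succ (i + 1))
      simp only [Nat.succ_eq_add_one] at *
      omega
    · have := hN1 i (by omega)
      have := hN2 i (by omega)
      have := hN1 (i + 1) (by omega)
      have := hN2 (i + 1) (by omega)
      omega⟩

/-- forward local rule -/
def locf (α β μ : Part) (k : ℕ) : Part :=
  ⟨fun i => match i with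
    | 0 => max (α.1 0) (β.1 0) + k
    | i + 1 => min (α.1 i) (β.1 i) + max (α.1 (i + 1)) (β.1 (i + 1)) -
      max (max (α.1 (i + 1)) (β.1 (i + 1))) (min (min (α.1 i) (β.1 i)) (μ.1 i)), by
    obtain ⟨N1, hN1⟩ := α.2.2
    obtain ⟨N2, hN2⟩ := β.2.2
    refine isPartition_of_step (fun i => ?_) ⟨N1 + N2 + 1, fun i hi => ?_⟩
    · cases i with
      | zero =>
        have := α.2.1 (Nat.le_succ 0)
        have := β.2.1 (Nat.le_succ 0)
        simp only [Nat.succ_eq_add_one] at *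
        omega
      | succ i =>
        have := α.2.1 (Nat.le_succ i)
        have := β.2.1 (Nat.le_succ i)
        have := α.2.1 (Nat.le_succ (i + 1))
        have := β.2.1 (Nat.le_succ (i + 1))
        simp only [Nat.succ_eq_add_one] at *
        omega
    · cases i with
      | zero => omega
      | succ i =>
        have := hN1 i (by omega)
        have := hN2 i (by omega)
        have := hN1 (i + 1) (by omega)
        have := hN2 (i + 1) (by omega)
        simp only
        omega⟩

theorem HS_loc (α β lam : Part) (h1 : HS β lam) (h2 : HS α lam) :
    HS (loc α β lam) α ∧ HS (loc α β lam) β := by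
  constructor <;> intro i <;> simp only [loc] <;>
  · have := h1 i
    have := h2 i
    have := h1 (i + 1)
    have := h2 (i + 1)
    omega

theorem HS_locf (α β μ : Part) (k : ℕ) (h1 : HS μ α) (h2 : HS μ β) :
    HS β (locf α β μ k) ∧ HS α (locf α β μ k) := by
  constructor <;> intro i <;> obtain - | i := i <;> simp only [locf]
  · have := h1 0
    have := h2 0
    omega
  · have := h1 i
    have := h2 i
    have := h1 (i + 1)
    have := h2 (i + 1)
    omega
  · have := h1 0
    have := h2 0
    omega
  · have := h1 i
    have := h2 i
    have := h1 (i + 1)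
    have := h2 (i + 1)
    omega

theorem locf_loc (α β lam : Part) (h1 : HS β lam) (h2 : HS α lam) :
    locf α β (loc α β lam) (lam.1 0 - max (α.1 0) (β.1 0)) = lam := by
  apply Subtype.ext
  funext i
  obtain - | i := i <;> simp only [locf, loc]
  · have := h1 0
    have := h2 0
    omega
  · have := h1 i
    have := h2 i
    have := h1 (i + 1)
    have := h2 (i + 1)
    omega

theorem loc_locf (α β μ : Part) (k : ℕ) (h1 : HS μ α) (h2 : HS μ β) :
    loc α β (locf α β μ k) = μ := by
  apply Subtype.ext
  funext i
  simp only [locf, loc]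
  have := h1 i
  have := h2 i
  have := h1 (i + 1)
  have := h2 (i + 1)
  omega

theorem dsz_loc (α β lam : Part) (h1 : HS β lam) (h2 : HS α lam) :
    dsz β.1 lam.1 = dsz (loc α β lam).1 α.1 + (lam.1 0 - max (α.1 0) (β.1 0)) := by
  obtain ⟨h3, h4⟩ := HS_loc α β lam h1 h2
  apply dsz_local α β (loc α β lam) lam _ h1 h2 h3 h4
  · have := h1 0
    have := h2 0
    omega
  · intro i
    simp only [loc]
    have := h1 i
    have := h2 i
    have := h1 (i + 1)
    have := h2 (i + 1)
    omega

theorem loc_comm (α β lam : Part) : loc α β lam = loc β α lam := by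
  apply Subtype.ext
  funext i
  simp only [loc]
  omega

theorem sig_ext {X Y : Part → Prop} (x y : Σ l : Part, PLift (X l) × PLift (Y l))
    (h : x.1 = y.1) : x = y := by
  obtain ⟨l, ⟨_⟩, ⟨_⟩⟩ := x
  obtain ⟨l', ⟨_⟩, ⟨_⟩⟩ := y
  obtain rfl : l = l' := h
  rfl

/-- The basic exchange. -/
noncomputable def exchHH (a b : ℕ+) : Exch (H a) (H b) where
  K := ℕ
  rA k := Pi.single a k
  rB k := Pi.single b k
  e α β :=
    { toFun := fun x => (⟨loc α β x.1, ⟨(HS_loc α β x.1 x.2.1.down x.2.2.down).1⟩,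
          ⟨(HS_loc α β x.1 x.2.1.down x.2.2.down).2⟩⟩, x.1.1 0 - max (α.1 0) (β.1 0))
      invFun := fun x => ⟨locf α β x.1.1 x.2,
        ⟨(HS_locf α β x.1.1 x.2 x.1.2.1.down x.1.2.2.down).1⟩,
        ⟨(HS_locf α β x.1.1 x.2 x.1.2.1.down x.1.2.2.down).2⟩⟩
      left_inv := fun x => sig_ext (X := fun l => HS β l) (Y := fun l => HS α l) _ _
        (locf_loc α β x.1 x.2.1.down x.2.2.down)
      right_inv := fun x => Prod.ext (sig_ext (X := fun l => HS l α) (Y := fun l => HS l β) _ _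
        (loc_locf α β x.1.1 x.2 x.1.2.1.down x.1.2.2.down))
        (by simp [locf]) }
  hA α β := by
    rintro ⟨lam, ⟨h1⟩, ⟨h2⟩⟩
    change (Pi.single a (dsz β.1 lam.1) : Wt) = Pi.single a (dsz (loc α β lam).1 α.1) +
      Pi.single a (lam.1 0 - max (α.1 0) (β.1 0))
    rw [← Pi.single_add, dsz_loc α β lam h1 h2]
  hB α β := by
    rintro ⟨lam, ⟨h1⟩, ⟨h2⟩⟩
    change (Pi.single b (dsz α.1 lam.1) : Wt) = Pi.single b (dsz (loc α β lam).1 β.1) +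
      Pi.single b (lam.1 0 - max (α.1 0) (β.1 0))
    rw [← Pi.single_add, dsz_loc β α lam h2 h1, loc_comm, max_comm]

/-- Tableaux with letters at most `n`. -/
noncomputable def Tab (n : ℕ) : Arr where
  hom μ lam := {T : SSYT μ.1 lam.1 // (∀ i, μ.1 i ≤ lam.1 i) ∧
    ∀ i j h₁ h₂, (T.entry i j h₁ h₂ : ℕ) ≤ n}
  wt T := fun a => wtY T.1 a

theorem SSYT.ext' {μ lam : ℕ → ℕ} (S T : SSYT μ lam)
    (h : ∀ i j h₁ h₂, S.entry i j h₁ h₂ = T.entry i j h₁ h₂) : S = T := by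
  obtain ⟨s, _, _⟩ := S
  obtain ⟨t, _, _⟩ := T
  obtain rfl : s = t := by
    funext i j h₁ h₂
    exact h i j h₁ h₂
  rfl

theorem wtY_eq_zero {μ lam : ℕ → ℕ} (T : SSYT μ lam) (a : ℕ+)
    (h : ∀ i j h₁ h₂, T.entry i j h₁ h₂ ≠ a) : wtY T a = 0 := by
  unfold wtY
  have : IsEmpty {p : ℕ × ℕ //
    ∃ (h₁ : μ p.1 < p.2) (h₂ : p.2 ≤ lam p.1), T.entry p.1 p.2 h₁ h₂ = a} :=
    ⟨fun ⟨p, h₁, h₂, h₃⟩ => h _ _ h₁ h₂ h₃⟩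
  exact Nat.card_of_isEmpty

theorem wtY_ne_zero {μ : ℕ → ℕ} {lam : Part} (T : SSYT μ lam.1) (i j h₁ h₂) :
    wtY T (T.entry i j h₁ h₂) ≠ 0 := by
  have hfin : {p : ℕ × ℕ | ∃ (h₁' : μ p.1 < p.2) (h₂' : p.2 ≤ lam.1 p.1),
      T.entry p.1 p.2 h₁' h₂' = T.entry i j h₁ h₂}.Finite :=
    (cells_finite μ lam).subset fun p ⟨h, h', _⟩ => ⟨h, h'⟩
  have hne : {p : ℕ × ℕ | ∃ (h₁' : μ p.1 < p.2) (h₂' : p.2 ≤ lam.1 p.1),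
      T.entry p.1 p.2 h₁' h₂' = T.entry i j h₁ h₂}.Nonempty := ⟨(i, j), h₁, h₂, rfl⟩
  exact Nat.pos_iff_ne_zero.mp ((Set.ncard_pos hfin).mpr hne)

/-- Add the letter `n + 1` in a horizontal strip. -/
def addStrip (n : ℕ) (μ ν lam : Part) (S : SSYT μ.1 ν.1)
    (hS : ∀ i j h₁ h₂, (S.entry i j h₁ h₂ : ℕ) ≤ n) (hs : HS ν lam) : SSYT μ.1 lam.1 where
  entry i j h₁ _ := if h : j ≤ ν.1 i then S.entry i j h₁ h else n.succPNat
  row_weak i j₁ j₂ h₁ h₂ h₃ h₄ hj := by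
    by_cases c₂ : j₂ ≤ ν.1 i
    · rw [dif_pos c₂, dif_pos (by omega)]
      exact S.row_weak _ _ _ _ _ _ _ hj
    · rw [dif_neg c₂]
      split_ifs with c₁
      · have := hS i j₁ h₁ c₁
        rw [← PNat.coe_le_coe, Nat.succPNat_coe]
        omega
      · exact le_rfl
  col_strict i₁ i₂ j h₁ h₂ h₃ h₄ hi := by
    have c₁ : j ≤ ν.1 i₁ := by
      have a := (hs i₁).2
      have b := lam.2.1 (show i₁ + 1 ≤ i₂ from hi)
      omega
    rw [dif_pos c₁]
    split_ifs with c₂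
    · exact S.col_strict _ _ _ _ _ _ _ hi
    · have := hS i₁ j h₁ c₁
      rw [← PNat.coe_lt_coe, Nat.succPNat_coe]
      omega

/-- Build a tableau from a strip and a smaller tableau. -/
def addTab (n : ℕ) (μ lam : Part) (x : ((Tab n).comp (H n.succPNat)).hom μ lam) :
    (Tab (n + 1)).hom μ lam :=
  ⟨addStrip n μ x.1 lam x.2.1.1 x.2.1.2.2 x.2.2.down,
    fun i => (x.2.1.2.1 i).trans (x.2.2.down i).1, fun i j h₁ h₂ => by
      simp only [addStrip]
      split_ifs with c
      · exact (x.2.1.2.2 i j h₁ c).trans (Nat.le_succ n)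
      · rw [Nat.succPNat_coe]⟩

theorem addStrip_entry_le (n : ℕ) (μ ν lam : Part) (S : SSYT μ.1 ν.1)
    (hS : ∀ i j h₁ h₂, (S.entry i j h₁ h₂ : ℕ) ≤ n) (hs : HS ν lam) (i j h₁ h₂) :
    ((addStrip n μ ν lam S hS hs).entry i j h₁ h₂ : ℕ) ≤ n ↔ j ≤ ν.1 i := by
  simp only [addStrip]
  split_ifs with c
  · exact ⟨fun _ => c, fun _ => hS _ _ _ _⟩
  · rw [Nat.succPNat_coe]
    omega

theorem addTab_inj (n : ℕ) (μ lam : Part) : Function.Injective (addTab n μ lam) := by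
  rintro ⟨ν, ⟨S, hS0, hS⟩, ⟨hs⟩⟩ ⟨ν', ⟨S', hS0', hS'⟩, ⟨hs'⟩⟩ h
  have h : addStrip n μ ν lam S hS hs = addStrip n μ ν' lam S' hS' hs' :=
    congrArg Subtype.val h
  have key : ∀ i j, μ.1 i < j → j ≤ lam.1 i → (j ≤ ν.1 i ↔ j ≤ ν'.1 i) := by
    intro i j h₁ h₂
    rw [← addStrip_entry_le n μ ν lam S hS hs i j h₁ h₂, h, addStrip_entry_le]
  obtain rfl : ν = ν' := by
    apply Subtype.ext
    funext i
    have a1 := hS0 i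
    have a2 := hS0' i
    have a3 := (hs i).1
    have a4 := (hs' i).1
    rcases lt_trichotomy (ν.1 i) (ν'.1 i) with c | c | c
    · have := (key i (ν'.1 i) (by omega) (by omega)).2 le_rfl
      omega
    · exact c
    · have := (key i (ν.1 i) (by omega) (by omega)).1 le_rfl
      omega
  obtain rfl : S = S' := by
    apply SSYT.ext'
    intro i j h₁ h₂
    have e : (addStrip n μ ν lam S hS hs).entry i j h₁ (h₂.trans (hs i).1) =
      (addStrip n μ ν lam S' hS' hs').entry i j h₁ (h₂.trans (hs i).1) := by rw [h]
    simpa only [addStrip, dif_pos h₂] using e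
  rfl

open Classical in
theorem addTab_surj (n : ℕ) (μ lam : Part) : Function.Surjective (addTab n μ lam) := by
  rintro ⟨T, h0, hT⟩
  have hex : ∀ i, ∃ v, μ.1 i ≤ v ∧ v ≤ lam.1 i ∧
      ∀ j h₁ h₂, j ≤ v ↔ (T.entry i j h₁ h₂ : ℕ) ≤ n := by
    intro i
    let P : ℕ → Prop := fun j => j ≤ μ.1 i ∨ ∃ h₁ h₂, (T.entry i j h₁ h₂ : ℕ) ≤ n
    have hμ : P (μ.1 i) := Or.inl le_rfl
    refine ⟨Nat.findGreatest P (lam.1 i), Nat.le_findGreatest (h0 i) hμ,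
      Nat.findGreatest_le _, fun j h₁ h₂ => ⟨fun hj => ?_, fun hj => ?_⟩⟩
    · have hP : P (Nat.findGreatest P (lam.1 i)) := Nat.findGreatest_spec (h0 i) hμ
      rcases hP with hP | ⟨k₁, k₂, hP⟩
      · omega
      · rcases hj.lt_or_eq with c | c
        · exact (PNat.coe_le_coe _ _ |>.2 (T.row_weak i _ _ h₁ h₂ k₁ k₂ c)).trans hP
        · simpa only [← c] using hP
    · exact Nat.le_findGreatest h₂ (Or.inr ⟨h₁, h₂, hj⟩)
  choose v hv1 hv2 hv3 using hex
  have hp : IsPartition v := by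
    refine ⟨fun i i' hii => ?_, ?_⟩
    · by_contra c
      push Not at c
      have a1 := hv1 i
      have a2 := hv2 i'
      have a3 := lam.2.1 hii
      have a4 := μ.2.1 hii
      have b1 := hv3 i (v i') (by omega) (by omega)
      have b2 := (hv3 i' (v i') (by omega) (by omega)).1 le_rfl
      have hlt : i < i' := lt_of_le_of_ne hii (by rintro rfl; omega)
      have b3 := PNat.coe_lt_coe _ _ |>.2 (T.col_strict i i' (v i') (by omega) (by omega)
        (by omega) (by omega) hlt)
      have := b1.2 (by omega)
      omega
    · obtain ⟨N, hN⟩ := lam.2.2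
      refine ⟨N, fun i hi => ?_⟩
      have := hN i hi
      have := hv2 i
      omega
  have hs : HS ⟨v, hp⟩ lam := by
    intro i
    refine ⟨hv2 i, ?_⟩
    by_contra c
    change ¬ lam.1 (i + 1) ≤ v i at c
    have a1 := hv1 i
    have a3 := lam.2.1 (Nat.le_succ i)
    have a4 := μ.2.1 (Nat.le_succ i)
    simp only [Nat.succ_eq_add_one] at a3 a4
    have b1 := hv3 i (lam.1 (i + 1)) (by omega) (by omega)
    have b3 := PNat.coe_lt_coe _ _ |>.2 (T.col_strict i (i + 1) (lam.1 (i + 1)) (by omega)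
      (by omega) (by omega) (by omega) (Nat.lt_succ_self i))
    have b4 := hT (i + 1) (lam.1 (i + 1)) (by omega) (by omega)
    have := mt b1.2 c
    omega
  let S : SSYT μ.1 v :=
    { entry := fun i j h₁ h₂ => T.entry i j h₁ (h₂.trans (hv2 i))
      row_weak := fun i j₁ j₂ h₁ h₂ h₃ h₄ h => T.row_weak _ _ _ _ _ _ _ h
      col_strict := fun i j₁ j₂ h₁ h₂ h₃ h₄ h => T.col_strict _ _ _ _ _ _ _ h }
  refine ⟨⟨⟨v, hp⟩, ⟨S, hv1, fun i j h₁ h₂ => (hv3 i j _ _).1 h₂⟩, ⟨hs⟩⟩, ?_⟩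
  apply Subtype.ext
  apply SSYT.ext'
  intro i j h₁ h₂
  simp only [addTab, addStrip]
  split_ifs with c
  · rfl
  · have b1 := mt (hv3 i j h₁ h₂).2 c
    have b2 := hT i j h₁ h₂
    apply PNat.eq
    rw [Nat.succPNat_coe]
    omega

theorem addTab_wt (n : ℕ) (μ lam : Part) (x : ((Tab n).comp (H n.succPNat)).hom μ lam) :
    (Tab (n + 1)).wt (addTab n μ lam x) = ((Tab n).comp (H n.succPNat)).wt x := by
  obtain ⟨ν, ⟨S, hS0, hS⟩, ⟨hs⟩⟩ := x
  funext a
  change wtY (addStrip n μ ν lam S hS hs) a =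
    wtY S a + (Pi.single n.succPNat (dsz ν.1 lam.1) : Wt) a
  by_cases ha : a = n.succPNat
  · subst ha
    rw [Pi.single_eq_same, wtY_eq_zero S, zero_add]
    · unfold wtY dsz
      refine Nat.card_congr (Equiv.subtypeEquivRight fun p => ?_)
      constructor
      · rintro ⟨h₁, h₂, h₃⟩
        have := addStrip_entry_le n μ ν lam S hS hs _ _ h₁ h₂
        rw [h₃, Nat.succPNat_coe] at this
        refine ⟨?_, h₂⟩
        by_contra c
        have := this.2 (by omega)
        omega
      · rintro ⟨h₁, h₂⟩
        refine ⟨(hS0 _).trans_lt h₁, h₂, ?_⟩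
        simp only [addStrip]
        rw [dif_neg (by omega)]
    · intro i j h₁ h₂ h
      have := hS i j h₁ h₂
      rw [h, Nat.succPNat_coe] at this
      omega
  · rw [Pi.single_eq_of_ne ha, add_zero]
    unfold wtY
    refine Nat.card_congr (Equiv.subtypeEquivRight fun p => ?_)
    constructor
    · rintro ⟨h₁, h₂, h₃⟩
      simp only [addStrip] at h₃
      split_ifs at h₃ with c
      · exact ⟨h₁, c, h₃⟩
      · exact absurd h₃.symm ha
    · rintro ⟨h₁, h₂, h₃⟩
      refine ⟨h₁, h₂.trans (hs _).1, ?_⟩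
      simp only [addStrip]
      rw [dif_pos h₂, h₃]

theorem Tab_zero_eq {μ lam : Part} (x : (Tab 0).hom μ lam) : μ = lam := by
  apply Subtype.ext
  funext i
  by_contra c
  have a := x.2.1 i
  have b := x.2.2 i (lam.1 i) (by omega) le_rfl
  have := (x.1.entry i (lam.1 i) (by omega) le_rfl).pos
  omega

/-- The empty tableau. -/
def emp (n : ℕ) (μ : Part) : (Tab n).hom μ μ :=
  ⟨{ entry := fun i j h₁ h₂ => absurd h₁ (by omega)
     row_weak := fun i j₁ j₂ h₁ h₂ => absurd h₁ (by omega)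
     col_strict := fun i i' j h₁ h₂ => absurd h₁ (by omega) },
    fun _ => le_rfl, fun i j h₁ h₂ => absurd h₁ (by omega)⟩

theorem eq_emp (n : ℕ) (μ : Part) (x : (Tab n).hom μ μ) : x = emp n μ := by
  apply Subtype.ext
  apply SSYT.ext'
  intro i j h₁ h₂
  omega

theorem wt_refl (n : ℕ) (μ : Part) (x : (Tab n).hom μ μ) : (Tab n).wt x = 0 := by
  funext a
  apply wtY_eq_zero
  intro i j h₁ h₂
  omega

/-- Exchange for tableaux without letters. -/
noncomputable def exchZero (B : Arr) : Exch (Tab 0) B where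
  K := Unit
  rA _ := 0
  rB _ := 0
  e α β :=
    { toFun := fun x => (⟨α, emp 0 α, cast (congrArg (B.hom α) (Tab_zero_eq x.2.1).symm) x.2.2⟩, ())
      invFun := fun x => ⟨β, emp 0 β, cast (congrArg (fun l => B.hom l β) (Tab_zero_eq x.1.2.1)) x.1.2.2⟩
      left_inv := by
        rintro ⟨lam, a, b⟩
        obtain rfl := Tab_zero_eq a
        rw [eq_emp 0 _ a]
        rfl
      right_inv := by
        rintro ⟨⟨μ, a, b⟩, ⟨⟩⟩
        obtain rfl := Tab_zero_eq a
        rw [eq_emp 0 _ a]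
        rfl }
  hA α β := by
    rintro ⟨lam, a, b⟩
    obtain rfl := Tab_zero_eq a
    rw [wt_refl, add_zero]
    exact (wt_refl _ _ _).symm
  hB α β := by
    rintro ⟨lam, a, b⟩
    obtain rfl := Tab_zero_eq a
    rw [add_zero]
    rfl

/-- Exchange with a fixed one-letter-compatible family extends to all tableaux. -/
noncomputable def exchTab (B : Arr) (hB : ∀ a, Exch (H a) B) : ∀ n, Exch (Tab n) B
  | 0 => exchZero B
  | n + 1 => ((exchTab B hB n).comp (hB n.succPNat)).congr
      (fun μ lam => (Equiv.ofBijective (addTab n μ lam)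
        ⟨addTab_inj n μ lam, addTab_surj n μ lam⟩).symm)
      (fun μ lam x => by
        rw [← addTab_wt]
        congr 1
        exact Equiv.apply_symm_apply (Equiv.ofBijective (addTab n μ lam)
          ⟨addTab_inj n μ lam, addTab_surj n μ lam⟩) x)

/-- The exchange for pairs of tableaux. -/
noncomputable def exchTT (n m : ℕ) : Exch (Tab n) (Tab m) :=
  exchTab (Tab m) (fun a => (exchTab (H a) (fun b => exchHH b a) m).swap) n

/-- The empty partition. -/
def zp : Part := ⟨fun _ => 0, fun _ _ _ => le_rfl, 0, fun _ _ => rfl⟩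

theorem eq_zp {n : ℕ} {μ : Part} (x : (Tab n).hom μ zp) : μ = zp := by
  apply Subtype.ext
  funext i
  exact Nat.le_zero.mp (x.2.1 i)

theorem exists_K (n m : ℕ) : ∃ (E : Exch (Tab n) (Tab m))
    (k : (Σ γ : Part, (Tab n).hom zp γ × (Tab m).hom zp γ) ≃ E.K),
    (∀ x, E.rA (k x) = (Tab n).wt x.2.1) ∧ (∀ x, E.rB (k x) = (Tab m).wt x.2.2) := by
  let E := exchTT n m
  let u : Unique (Σ μ : Part, (Tab n).hom μ zp × (Tab m).hom μ zp) :=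
    { default := ⟨zp, emp n zp, emp m zp⟩
      uniq := by
        rintro ⟨μ, a, b⟩
        obtain rfl := eq_zp a
        rw [eq_emp n _ a, eq_emp m _ b] }
  refine ⟨E, (E.e zp zp).trans (Equiv.uniqueProd _ _), fun x => ?_, fun x => ?_⟩
  · rw [E.hA zp zp x]
    have : (Tab n).wt ((E.e zp zp) x).1.2.1 = 0 := by
      rw [u.uniq ((E.e zp zp) x).1]
      exact wt_refl _ _ _
    rw [this, zero_add]
    rfl
  · rw [E.hB zp zp x]
    have : (Tab m).wt ((E.e zp zp) x).1.2.2 = 0 := by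
      rw [u.uniq ((E.e zp zp) x).1]
      exact wt_refl _ _ _
    rw [this, zero_add]
    rfl

theorem exists_bound (f : ℕ+ → ℕ) (hf : (Function.support f).Finite) :
    ∃ n : ℕ, ∀ a : ℕ+, f a ≠ 0 → (a : ℕ) ≤ n := by
  obtain ⟨n, hn⟩ := hf.bddAbove
  exact ⟨n, fun a ha => hn ha⟩

end SkewYT


/-- skew Cauchy identity, coefficient form: for partitions
`α, β` and finitely supported `f, g : ℕ+ → ℕ`, the number of 6-tuples
`(μ, γ, T, U, V, W)` — `μ ⊆ α`, `μ ⊆ β` partitions, `γ` a partition, `T` an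
SSYT of shape `α/μ`, `U` of shape `β/μ`, `V, W` of straight shape `γ`, with
`wt T + wt V = f` and `wt U + wt W = g` — equals the number of triples
`(λ, P, Q)` — `λ ⊇ α, β` a partition, `P` an SSYT of shape `λ/β` with
`wt P = f`, `Q` of shape `λ/α` with `wt Q = g`. -/
theorem stmt17 (α β : {h : ℕ → ℕ // IsPartition h})
    (f g : ℕ+ → ℕ) (hf : (Function.support f).Finite) (hg : (Function.support g).Finite) :
    Nat.card {x : Σ (μ : {h : ℕ → ℕ // IsPartition h}) (γ : {h : ℕ → ℕ // IsPartition h}),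
                (SSYT μ.1 α.1 × SSYT μ.1 β.1) × (SSYT (fun _ => 0) γ.1 × SSYT (fun _ => 0) γ.1) //
                (∀ i, x.1.1 i ≤ α.1 i) ∧ (∀ i, x.1.1 i ≤ β.1 i) ∧
                (∀ a, wtY x.2.2.1.1 a + wtY x.2.2.2.1 a = f a) ∧
                (∀ a, wtY x.2.2.1.2 a + wtY x.2.2.2.2 a = g a)} =
    Nat.card {y : Σ lam : {h : ℕ → ℕ // IsPartition h}, SSYT β.1 lam.1 × SSYT α.1 lam.1 //
                (∀ i, α.1 i ≤ y.1.1 i) ∧ (∀ i, β.1 i ≤ y.1.1 i) ∧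
                (∀ a, wtY y.2.1 a = f a) ∧ (∀ a, wtY y.2.2 a = g a)} := by
  obtain ⟨n, hn⟩ := exists_bound f hf
  obtain ⟨m, hm⟩ := exists_bound g hg
  obtain ⟨E, k, hk1, hk2⟩ := exists_K n m
  have bd : ∀ (N : ℕ) (φ : ℕ+ → ℕ), (∀ a : ℕ+, φ a ≠ 0 → (a : ℕ) ≤ N) →
      ∀ (μ : ℕ → ℕ) (lam : Part) (T : SSYT μ lam.1), (∀ a, wtY T a ≤ φ a) →
      ∀ i j h₁ h₂, (T.entry i j h₁ h₂ : ℕ) ≤ N := by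
    intro N φ hN μ lam T hT i j h₁ h₂
    apply hN
    have h1 := wtY_ne_zero T i j h₁ h₂
    have h2 := hT (T.entry i j h₁ h₂)
    omega
  let X := {p : (Σ μ : Part, (Tab n).hom μ α × (Tab m).hom μ β) ×
      (Σ γ : Part, (Tab n).hom zp γ × (Tab m).hom zp γ) //
      (Tab n).wt p.1.2.1 + (Tab n).wt p.2.2.1 = f ∧ (Tab m).wt p.1.2.2 + (Tab m).wt p.2.2.2 = g}
  let Y := {p : Σ lam : Part, (Tab n).hom β lam × (Tab m).hom α lam //
      (Tab n).wt p.2.1 = f ∧ (Tab m).wt p.2.2 = g}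
  have hX : _ = Nat.card X := Nat.card_congr (α := {x : Σ (μ : {h : ℕ → ℕ // IsPartition h})
      (γ : {h : ℕ → ℕ // IsPartition h}),
                (SSYT μ.1 α.1 × SSYT μ.1 β.1) × (SSYT (fun _ => 0) γ.1 × SSYT (fun _ => 0) γ.1) //
                (∀ i, x.1.1 i ≤ α.1 i) ∧ (∀ i, x.1.1 i ≤ β.1 i) ∧
                (∀ a, wtY x.2.2.1.1 a + wtY x.2.2.2.1 a = f a) ∧
                (∀ a, wtY x.2.2.1.2 a + wtY x.2.2.2.2 a = g a)})
    { toFun := fun x => ⟨(⟨x.1.1,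
          ⟨x.1.2.2.1.1, x.2.1, bd n f hn _ _ _ fun a => by have := x.2.2.2.1 a; omega⟩,
          ⟨x.1.2.2.1.2, x.2.2.1, bd m g hm _ _ _ fun a => by have := x.2.2.2.2 a; omega⟩⟩,
          ⟨x.1.2.1,
          ⟨x.1.2.2.2.1, fun _ => Nat.zero_le _,
            bd n f hn _ _ _ fun a => le_of_add_le_right (x.2.2.2.1 a).le⟩,
          ⟨x.1.2.2.2.2, fun _ => Nat.zero_le _,
            bd m g hm _ _ _ fun a => le_of_add_le_right (x.2.2.2.2 a).le⟩⟩),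
          funext x.2.2.2.1, funext x.2.2.2.2⟩
      invFun := fun x => ⟨⟨x.1.1.1, x.1.2.1, (x.1.1.2.1.1, x.1.1.2.2.1),
          (x.1.2.2.1.1, x.1.2.2.2.1)⟩, x.1.1.2.1.2.1, x.1.1.2.2.2.1,
          fun a => congrFun x.2.1 a, fun a => congrFun x.2.2 a⟩
      left_inv := fun _ => rfl
      right_inv := fun _ => rfl }
  have hY : _ = Nat.card Y := Nat.card_congr (α := {y : Σ lam : {h : ℕ → ℕ // IsPartition h},
                SSYT β.1 lam.1 × SSYT α.1 lam.1 //
                (∀ i, α.1 i ≤ y.1.1 i) ∧ (∀ i, β.1 i ≤ y.1.1 i) ∧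
                (∀ a, wtY y.2.1 a = f a) ∧ (∀ a, wtY y.2.2 a = g a)})
    { toFun := fun y => ⟨⟨y.1.1,
          ⟨y.1.2.1, y.2.2.1, bd n f hn _ _ _ fun a => (y.2.2.2.1 a).le⟩,
          ⟨y.1.2.2, y.2.1, bd m g hm _ _ _ fun a => (y.2.2.2.2 a).le⟩⟩,
          funext y.2.2.2.1, funext y.2.2.2.2⟩
      invFun := fun y => ⟨⟨y.1.1, y.1.2.1.1, y.1.2.2.1⟩, y.1.2.2.2.1, y.1.2.1.2.1,
          fun a => congrFun y.2.1 a, fun a => congrFun y.2.2 a⟩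
      left_inv := fun _ => rfl
      right_inv := fun _ => rfl }
  rw [hX, hY]
  refine (Nat.card_congr (Equiv.subtypeEquiv
    ((E.e α β).trans (Equiv.prodCongr (Equiv.refl _) k.symm)) fun y => ?_)).symm
  have e1 := hk1 (k.symm (E.e α β y).2)
  have e2 := hk2 (k.symm (E.e α β y).2)
  rw [Equiv.apply_symm_apply] at e1 e2
  rw [E.hA α β y, E.hB α β y, e1, e2]
  rfl
end

section
/- For every positive integer m, any two words of length m each of which contains every letter of {1, 2, …, m} exactly once (i.e. any two permutations of 1, 2, …, m written as words) are cyclic Knuth equivalent. -/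
namespace CycKnuth

/-- Generators of cyclic Knuth equivalence on words (lists of positive
integers): the two elementary Knuth transformations
`yzx → yxz` (for `x < y ≤ z`) and `xzy → zxy` (for `x ≤ y < z`), and the
rotation moving the last letter to the front.  (The generated equivalence
relation automatically contains the inverse transformations.) -/
inductive KnuthStep : List ℕ+ → List ℕ+ → Prop
  | K1 (a b : List ℕ+) (x y z : ℕ+) (h₁ : x < y) (h₂ : y ≤ z) :
      KnuthStep (a ++ [y, z, x] ++ b) (a ++ [y, x, z] ++ b)
  | K2 (a b : List ℕ+) (x y z : ℕ+) (h₁ : x ≤ y) (h₂ : y < z) :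
      KnuthStep (a ++ [x, z, y] ++ b) (a ++ [z, x, y] ++ b)
  | rot (w : List ℕ+) (x : ℕ+) :
      KnuthStep (w ++ [x]) (x :: w)

/-- Cyclic Knuth equivalence: the equivalence relation generated by the
elementary Knuth transformations and rotations. -/
def CyclicKnuthEquiv (v w : List ℕ+) : Prop := Relation.EqvGen KnuthStep v w

/-- The charge-like statistic: weighted count of `r` such that `r+2` is left of `r+1`. -/
def chg (m : ℕ) (w : List ℕ+) : ℕ :=
  ∑ r ∈ Finset.range m,
    if w.idxOf (r+1).succPNat < w.idxOf r.succPNat then m - 1 - r else 0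

theorem idx_swap (a b : List ℕ+) (p q u v : ℕ+) (hn : (a ++ p :: q :: b).Nodup)
    (h1 : ¬ (u = p ∧ v = q)) (h2 : ¬ (u = q ∧ v = p)) :
    (a ++ p :: q :: b).idxOf u < (a ++ p :: q :: b).idxOf v ↔
    (a ++ q :: p :: b).idxOf u < (a ++ q :: p :: b).idxOf v := by
  have hpq : p ≠ q := by
    rintro rfl
    simp [List.nodup_append] at hn
  have hpa : p ∉ a := by
    intro h
    simp only [List.nodup_append] at hn
    exact hn.2.2 p h p (by simp) rfl
  have hqa : q ∉ a := by
    intro h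
    simp only [List.nodup_append] at hn
    exact hn.2.2 q h q (by simp) rfl
  have key : ∀ (p q v : ℕ+), p ≠ q → p ∉ a → q ∉ a →
      (v ∈ a → (a ++ p :: q :: b).idxOf v = a.idxOf v ∧ a.idxOf v < a.length) ∧
      (v = p → (a ++ p :: q :: b).idxOf v = a.length) ∧
      (v = q → (a ++ p :: q :: b).idxOf v = a.length + 1) ∧
      (v ∉ a → v ≠ p → v ≠ q → (a ++ p :: q :: b).idxOf v = a.length + 2 + b.idxOf v) := by
    intro p q v hpq hpa hqa
    refine ⟨fun h => ⟨by simp [List.idxOf_append, h], List.idxOf_lt_length_of_mem h⟩, ?_, ?_, ?_⟩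
    · rintro rfl
      simp [List.idxOf_append, hpa]
    · rintro rfl
      rw [List.idxOf_append, if_neg hqa, List.idxOf_cons_ne _ hpq]
      simp; omega
    · intro h h3 h4
      rw [List.idxOf_append, if_neg h, List.idxOf_cons_ne _ (Ne.symm h3),
        List.idxOf_cons_ne _ (Ne.symm h4)]
      omega
  have k1 := key p q u hpq hpa hqa
  have k2 := key p q v hpq hpa hqa
  have k3 := key q p u hpq.symm hqa hpa
  have k4 := key q p v hpq.symm hqa hpa
  clear key hn
  generalize (a ++ p :: q :: b).idxOf u = i1 at *
  generalize (a ++ p :: q :: b).idxOf v = i2 at *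
  generalize (a ++ q :: p :: b).idxOf u = i3 at *
  generalize (a ++ q :: p :: b).idxOf v = i4 at *
  generalize a.idxOf u = i5 at *
  generalize a.idxOf v = i6 at *
  generalize b.idxOf u = i7 at *
  generalize b.idxOf v = i8 at *
  generalize a.length = n at *
  by_cases c1 : u ∈ a <;> by_cases c2 : v ∈ a <;> by_cases c3 : u = p <;> by_cases c4 : u = q <;>
    by_cases c5 : v = p <;> by_cases c6 : v = q <;> grind

theorem chg_swap (m : ℕ) (a b : List ℕ+) (p q y : ℕ+) (hn : (a ++ p :: q :: b).Nodup)
    (h : (p < y ∧ y < q) ∨ (q < y ∧ y < p)) :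
    chg m (a ++ p :: q :: b) = chg m (a ++ q :: p :: b) := by
  unfold chg
  refine Finset.sum_congr rfl fun r _ => ?_
  have h' : ((p:ℕ) < y ∧ (y:ℕ) < q) ∨ ((q:ℕ) < y ∧ (y:ℕ) < p) := by exact_mod_cast h
  congr 1
  rw [idx_swap a b p q _ _ hn]
  · rintro ⟨rfl, rfl⟩
    simp only [Nat.succPNat_coe] at h'
    omega
  · rintro ⟨rfl, rfl⟩
    simp only [Nat.succPNat_coe] at h'
    omega

theorem chg_rot (m k : ℕ) (u : List ℕ+) (hk : k + 1 < m)
    (hx : (k+1).succPNat ∉ u) (hall : ∀ s, s < m → k + 1 ≠ s → s.succPNat ∈ u) :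
    chg m (u ++ [(k+1).succPNat]) < chg m ((k+1).succPNat :: u) := by
  have hp : k.succPNat ∈ u := hall k (by omega) (by omega)
  have main : ∀ r ∈ Finset.range m,
      (if (u ++ [(k+1).succPNat]).idxOf (r+1).succPNat < (u ++ [(k+1).succPNat]).idxOf r.succPNat
        then m - 1 - r else 0) + (if k = r then m - 1 - k else 0) ≤
      (if ((k+1).succPNat :: u).idxOf (r+1).succPNat < ((k+1).succPNat :: u).idxOf r.succPNat
        then m - 1 - r else 0) + (if k + 1 = r then m - 1 - (k + 1) else 0) := by
    intro r hr
    rw [Finset.mem_range] at hr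
    by_cases h1 : k = r
    · subst h1
      have e1 : (u ++ [(k+1).succPNat]).idxOf k.succPNat < u.length := by
        rw [List.idxOf_append, if_pos hp]; exact List.idxOf_lt_length_of_mem hp
      have e2 : (u ++ [(k+1).succPNat]).idxOf (k+1).succPNat = u.length := by
        simp [List.idxOf_append, hx]
      have e3 : (k+1).succPNat ≠ k.succPNat := by
        intro h; have := Nat.succPNat_injective h; omega
      have e4 : ((k+1).succPNat :: u).idxOf k.succPNat = u.idxOf k.succPNat + 1 :=
        List.idxOf_cons_ne _ e3
      rw [e4, e2, List.idxOf_cons_self, if_neg (by omega)]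
      simp
    · by_cases h2 : k + 1 = r
      · subst h2
        simp only [h1, if_false, if_true]
        split_ifs <;> omega
      · have e : ∀ s, k + 1 ≠ s → ((k+1).succPNat :: u).idxOf s.succPNat = u.idxOf s.succPNat + 1 := by
          intro s hs
          exact List.idxOf_cons_ne _ (fun h => hs (Nat.succPNat_injective h))
        have e' : ∀ s, s < m → k + 1 ≠ s →
            (u ++ [(k+1).succPNat]).idxOf s.succPNat = u.idxOf s.succPNat := by
          intro s hsm hs
          rw [List.idxOf_append, if_pos (hall s hsm hs)]
        by_cases h3 : r + 1 = m
        · have : m - 1 - r = 0 := by omega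
          simp [this, h1]
        rw [e r h2, e (r+1) (by omega), e' r hr h2, e' (r+1) (by omega) (by omega)]
        simp [h1, h2]
  have := Finset.sum_le_sum main
  rw [Finset.sum_add_distrib, Finset.sum_add_distrib, Finset.sum_ite_eq, Finset.sum_ite_eq,
    if_pos (by simp; omega), if_pos (by simpa using hk)] at this
  unfold chg
  omega

/-- Equivalent, same letters, same charge. -/
def Good (m : ℕ) (w w' : List ℕ+) : Prop :=
  CyclicKnuthEquiv w w' ∧ w.Perm w' ∧ chg m w = chg m w'

theorem Good.trans {m : ℕ} {a b c : List ℕ+} (h : Good m a b) (h' : Good m b c) : Good m a c :=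
  ⟨Relation.EqvGen.trans _ _ _ h.1 h'.1, h.2.1.trans h'.2.1, h.2.2.trans h'.2.2⟩

theorem Good.k1 (m : ℕ) (a b : List ℕ+) (x y z : ℕ+) (h₁ : x < y) (h₂ : y < z)
    (hn : (a ++ [y, z, x] ++ b).Nodup) :
    Good m (a ++ [y, z, x] ++ b) (a ++ [y, x, z] ++ b) := by
  refine ⟨.rel _ _ (.K1 a b x y z h₁ h₂.le), ?_, ?_⟩
  · simpa using (List.perm_append_left_iff a).2 ((List.Perm.swap x z b).cons y)
  · have := chg_swap m (a ++ [y]) b z x y (by simpa using hn) (Or.inr ⟨h₁, h₂⟩)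
    simpa using this

theorem Good.k2 (m : ℕ) (a b : List ℕ+) (x y z : ℕ+) (h₁ : x < y) (h₂ : y < z)
    (hn : (a ++ [x, z, y] ++ b).Nodup) :
    Good m (a ++ [x, z, y] ++ b) (a ++ [z, x, y] ++ b) := by
  refine ⟨.rel _ _ (.K2 a b x y z h₁.le h₂), ?_, ?_⟩
  · simpa using (List.perm_append_left_iff a).2 (List.Perm.swap z x (y :: b))
  · have := chg_swap m a (y :: b) x z y (by simpa using hn) (Or.inl ⟨h₁, h₂⟩)
    simpa using this

theorem pull (m : ℕ) (p : List ℕ+) : ∀ (z b : ℕ+) (t : List ℕ+), b < z →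
    (1 :: (p ++ z :: b :: t)).Nodup →
    ∃ x w', x ≠ 1 ∧ Good m (1 :: (p ++ z :: b :: t)) (x :: w') := by
  induction p using List.reverseRecOn with
  | nil =>
    intro z b t hbz hn
    have hb : (1 : ℕ+) < b := by
      refine lt_of_le_of_ne (one_le) ?_
      rintro rfl
      simp at hn
    exact ⟨z, 1 :: b :: t, (hb.trans hbz).ne', Good.k2 m [] t 1 b z hb hbz (by simpa using hn)⟩
  | append_singleton p y ih =>
    intro z b t hbz hn
    have hyz : y ≠ z := by
      rintro rfl
      simp [List.nodup_append] at hn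
    have hyb : y ≠ b := by
      rintro rfl
      simp [List.nodup_append] at hn
    rcases lt_or_gt_of_ne hyz with h | h
    · rcases lt_or_gt_of_ne hyb with h' | h'
      · have g := Good.k2 m (1 :: p) t y b z h' hbz (by simpa using hn)
        obtain ⟨x, w', hx, g'⟩ := ih z y (b :: t) h (by simpa using g.2.1.nodup_iff.1 (by simpa using hn))
        exact ⟨x, w', hx, Good.trans (by simpa using g) g'⟩
      · have g := Good.k1 m (1 :: p) t b y z h' h (by simpa using hn)
        obtain ⟨x, w', hx, g'⟩ := ih y b (z :: t) h' (by simpa using g.2.1.nodup_iff.1 (by simpa using hn))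
        exact ⟨x, w', hx, Good.trans (by simpa using g) g'⟩
    · obtain ⟨x, w', hx, g'⟩ := ih y z (b :: t) h (by simpa using hn)
      exact ⟨x, w', hx, by simpa using g'⟩

theorem to_id (m : ℕ) : ∀ (n : ℕ) (w : List ℕ+), chg m w = n →
    w.Perm ((List.range m).map Nat.succPNat) →
    CyclicKnuthEquiv w ((List.range m).map Nat.succPNat) := by
  intro n
  induction n using Nat.strong_induction_on with
  | _ n ih =>
  have hidn : ((List.range m).map Nat.succPNat).Nodup :=
    List.nodup_range.map Nat.succPNat_injective
  have step : ∀ x u, x ≠ 1 → chg m (x :: u) = n →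
      (x :: u).Perm ((List.range m).map Nat.succPNat) →
      CyclicKnuthEquiv (x :: u) ((List.range m).map Nat.succPNat) := by
    intro x u hx hc hp
    have hn : (x :: u).Nodup := hp.nodup_iff.2 hidn
    have hxm := hp.subset (List.mem_cons_self (a := x) (l := u))
    obtain ⟨j, hj, rfl⟩ := List.mem_map.1 hxm
    rw [List.mem_range] at hj
    obtain _ | k := j
    · exact absurd rfl hx
    have hku : ∀ s, s < m → k + 1 ≠ s → s.succPNat ∈ u := by
      intro s hs hks
      have hk : s.succPNat ∈ (k+1).succPNat :: u :=
        hp.symm.subset (List.mem_map.2 ⟨s, List.mem_range.2 hs, rfl⟩)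
      rcases List.mem_cons.1 hk with h | h
      · exact absurd (Nat.succPNat_injective h).symm hks
      · exact h
    have hlt := chg_rot m k u hj (List.nodup_cons.1 hn).1 hku
    have hr := ih _ (hc ▸ hlt) (u ++ [(k+1).succPNat]) rfl
      ((List.perm_append_singleton _ _).trans hp)
    exact .trans _ _ _ (.symm _ _ (.rel _ _ (.rot u _))) hr
  intro w hc hp
  have hn : w.Nodup := hp.nodup_iff.2 hidn
  match w, hc, hp, hn with
  | [], _, hp, _ => rw [List.nil_perm.1 hp]; exact .refl _
  | x :: u, hc, hp, hn =>
    by_cases hx : x = 1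
    · subst hx
      by_cases hch : u.IsChain (· ≤ ·)
      · have hs : (1 :: u).Pairwise (· ≤ ·) :=
          List.pairwise_cons.2 ⟨fun _ _ => one_le, List.isChain_iff_pairwise.1 hch⟩
        have hs' : ((List.range m).map Nat.succPNat).Pairwise (· ≤ ·) := by
          rw [List.pairwise_map]
          refine List.pairwise_lt_range.imp ?_
          intro a b h
          exact Nat.succPNat_le_succPNat.2 h.le
        rw [List.Perm.eq_of_pairwise (fun a b _ _ h h' => le_antisymm h h') hs hs' hp]
        exact .refl _
      · rw [List.isChain_iff_forall_rel_of_append_cons_cons] at hch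
        push Not at hch
        obtain ⟨z, b, p, t, rfl, hbz⟩ := hch
        obtain ⟨x, w', hx, g⟩ := pull m p z b t hbz hn
        exact .trans _ _ _ g.1 (step x w' hx (g.2.2 ▸ hc) (g.2.1.symm.trans hp))
    · exact step x u hx hc hp

end CycKnuth

open CycKnuth

/-- for every positive integer `m`, any two words of length `m`
containing each letter of `{1, …, m}` exactly once (i.e. permutations of
`1, 2, …, m`) are cyclic Knuth equivalent. -/
theorem stmt18 (m : ℕ) (hm : 0 < m) (w v : List ℕ+)
    (hw : w.Perm ((List.range m).map Nat.succPNat))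
    (hv : v.Perm ((List.range m).map Nat.succPNat)) :
    CyclicKnuthEquiv w v := by
  exact .trans _ _ _ (to_id m _ w rfl hw) (.symm _ _ (to_id m _ v rfl hv))
end

section
/- Any two words (finite lists of positive integers) that are permutations of each other — i.e. one is a rearrangement of the multiset of letters of the other — are cyclic Knuth equivalent. -/
namespace CycKnuth

theorem ck_trans {a b c : List ℕ+} (h : CyclicKnuthEquiv a b) (h' : CyclicKnuthEquiv b c) :
    CyclicKnuthEquiv a c :=
  Relation.EqvGen.trans _ _ _ h h'

/-- Equivalence in every context. -/
def CtxEquiv (s t : List ℕ+) : Prop := ∀ a b, CyclicKnuthEquiv (a ++ s ++ b) (a ++ t ++ b)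

theorem CtxEquiv.ctx {s t : List ℕ+} (h : CtxEquiv s t) (c d : List ℕ+) :
    CtxEquiv (c ++ s ++ d) (c ++ t ++ d) := by
  intro a b
  simpa using h (a ++ c) (d ++ b)

theorem CtxEquiv.trans {s t u : List ℕ+} (h : CtxEquiv s t) (h' : CtxEquiv t u) :
    CtxEquiv s u := fun a b => ck_trans (h a b) (h' a b)

theorem ctx_K1 {x y z : ℕ+} (h₁ : x < y) (h₂ : y ≤ z) : CtxEquiv [y, z, x] [y, x, z] :=
  fun a b => Relation.EqvGen.rel _ _ (KnuthStep.K1 a b x y z h₁ h₂)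

theorem ctx_K2 {x y z : ℕ+} (h₁ : x ≤ y) (h₂ : y < z) : CtxEquiv [x, z, y] [z, x, y] :=
  fun a b => Relation.EqvGen.rel _ _ (KnuthStep.K2 a b x y z h₁ h₂)

theorem move_left (x : ℕ+) (r : List ℕ+) : ∀ y, x < y → (y :: r).Pairwise (· ≤ ·) →
    CtxEquiv (y :: r ++ [x]) (y :: x :: r) := by
  induction r with
  | nil => intro y _ _ a b; exact Relation.EqvGen.refl _
  | cons z r ih =>
    intro y hy hs
    have hyz : y ≤ z := List.rel_of_pairwise_cons hs (by simp)
    have h1 := (ih z (hy.trans_le hyz) hs.of_cons).ctx [y] []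
    have h2 := (ctx_K1 hy hyz).ctx [] r
    simp only [List.append_nil, List.nil_append, List.cons_append] at h1 h2 ⊢
    exact h1.trans h2

theorem bump_left (x y : ℕ+) (hxy : x < y) (r : List ℕ+) :
    (r ++ [x]).Pairwise (· ≤ ·) → CtxEquiv (r ++ [y, x]) (y :: r ++ [x]) := by
  induction r with
  | nil => intro _ a b; exact Relation.EqvGen.refl _
  | cons p r ih =>
    intro hs
    have h1 := (ih hs.of_cons).ctx [p] []
    have hlt : ∀ q ∈ r ++ [x], q < y := by
      intro q hq
      have hs' : (r ++ [x]).Pairwise (· ≤ ·) := hs.of_cons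
      rw [List.pairwise_append] at hs'
      rw [List.mem_append] at hq
      rcases hq with hq | hq
      · exact (hs'.2.2 q hq x (by simp)).trans_lt hxy
      · simp at hq; exact hq ▸ hxy
    have hle : ∀ q ∈ r ++ [x], p ≤ q := fun q hq => List.rel_of_pairwise_cons hs hq
    have h2 : CtxEquiv (p :: y :: (r ++ [x])) (y :: p :: (r ++ [x])) := by
      cases hr : r ++ [x] with
      | nil => simp at hr
      | cons q t =>
        have hq : q ∈ r ++ [x] := by simp [hr]
        simpa using (ctx_K2 (hle q hq) (hlt q hq)).ctx [] t
    simp only [List.append_nil, List.nil_append, List.cons_append] at h1 h2 ⊢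
    exact h1.trans h2

/-- Row insertion: `x` is either appended to the sorted row `r` or bumps a larger letter. -/
theorem row_insert (x : ℕ+) (r : List ℕ+) (hs : r.Pairwise (· ≤ ·)) :
    (r ++ [x]).Pairwise (· ≤ ·) ∨ ∃ (y : ℕ+) (r' : List ℕ+), r'.Pairwise (· ≤ ·) ∧
      (r'.map (fun a : ℕ+ => (a : ℕ))).sum < (r.map (fun a : ℕ+ => (a : ℕ))).sum ∧
      CtxEquiv (r ++ [x]) (y :: r') := by
  by_cases hall : ∀ a ∈ r, a ≤ x
  · left
    rw [List.pairwise_append]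
    refine ⟨hs, by simp, ?_⟩
    intro a ha b hb
    simp at hb
    exact hb ▸ hall a ha
  · right
    have hsplit : ∃ r₁ y r₂, r = r₁ ++ y :: r₂ ∧ (∀ a ∈ r₁, a ≤ x) ∧ x < y := by
      clear hs
      induction r with
      | nil => simp at hall
      | cons p r ih =>
        by_cases hp : p ≤ x
        · have : ¬ ∀ a ∈ r, a ≤ x := by
            intro h; apply hall; simpa [hp] using h
          obtain ⟨r₁, y, r₂, rfl, h1, h2⟩ := ih this
          exact ⟨p :: r₁, y, r₂, rfl, by simpa [hp] using h1, h2⟩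
        · exact ⟨[], p, r, rfl, by simp, not_le.mp hp⟩
    obtain ⟨r₁, y, r₂, rfl, h1, hxy⟩ := hsplit
    have hs' := hs
    rw [List.pairwise_append, List.pairwise_cons] at hs'
    obtain ⟨s1, ⟨s2, s3⟩, s4⟩ := hs'
    have hs1 : (r₁ ++ [x]).Pairwise (· ≤ ·) := by
      rw [List.pairwise_append]
      refine ⟨s1, by simp, ?_⟩
      intro a ha b hb
      simp at hb
      exact hb ▸ h1 a ha
    refine ⟨y, r₁ ++ x :: r₂, ?_, ?_, ?_⟩
    · rw [List.pairwise_append, List.pairwise_cons]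
      refine ⟨s1, ⟨fun a ha => hxy.le.trans (s2 a ha), s3⟩, ?_⟩
      intro a ha b hb
      rcases List.mem_cons.mp hb with rfl | hb
      · exact h1 a ha
      · exact s4 a ha b (List.mem_cons_of_mem _ hb)
    · have : (x : ℕ) < (y : ℕ) := hxy
      simp [this]
    · have e1 := (move_left x r₂ y hxy (List.pairwise_cons.mpr ⟨s2, s3⟩)).ctx r₁ []
      have e2 := (bump_left x y hxy r₁ hs1).ctx [] r₂
      simp only [List.append_nil, List.nil_append, List.cons_append, List.append_assoc] at e1 e2 ⊢
      exact e1.trans e2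

theorem to_sorted (n : ℕ) : ∀ (k : ℕ) (v r : List ℕ+), v.length = n →
    (r.map (fun a : ℕ+ => (a : ℕ))).sum = k → r.Pairwise (· ≤ ·) →
    ∃ s : List ℕ+, s.Pairwise (· ≤ ·) ∧ CyclicKnuthEquiv (v ++ r) s := by
  induction n with
  | zero =>
    intro k v r hv _ hr
    obtain rfl := List.length_eq_zero_iff.mp hv
    exact ⟨r, hr, Relation.EqvGen.refl _⟩
  | succ n ihn =>
    intro k
    induction k using Nat.strong_induction_on with
    | _ k ihk =>
      intro v r hv hk hr
      match v, hv with
      | x :: v', hv =>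
        have hv' : v'.length = n := by simpa using hv
        have e0 : CyclicKnuthEquiv (x :: v' ++ r) (v' ++ (r ++ [x])) := by
          have := KnuthStep.rot (v' ++ r) x
          rw [List.append_assoc] at this
          exact Relation.EqvGen.symm _ _ (Relation.EqvGen.rel _ _ this)
        rcases row_insert x r hr with h | ⟨y, r', h1, h2, h3⟩
        · obtain ⟨s, hs, hE⟩ := ihn _ v' (r ++ [x]) hv' rfl h
          exact ⟨s, hs, ck_trans e0 hE⟩
        · obtain ⟨s, hs, hE⟩ := ihk _ (hk ▸ h2) (v' ++ [y]) r' (by simp [hv']) rfl h1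
          refine ⟨s, hs, ck_trans e0 (ck_trans ?_ hE)⟩
          simpa using h3 v' []

theorem step_perm {v w : List ℕ+} (h : KnuthStep v w) : v.Perm w := by
  cases h with
  | K1 a b x y z _ _ =>
    exact ((((List.Perm.swap x z [])).cons y).append_left a).append_right b
  | K2 a b x y z _ _ =>
    exact ((List.Perm.swap z x [y]).append_left a).append_right b
  | rot w x => exact List.perm_append_singleton x w

theorem ck_perm {v w : List ℕ+} (h : CyclicKnuthEquiv v w) : v.Perm w := by
  induction h with
  | rel _ _ h => exact step_perm h
  | refl _ => exact List.Perm.refl _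
  | symm _ _ _ ih => exact ih.symm
  | trans _ _ _ _ _ ih1 ih2 => exact ih1.trans ih2

end CycKnuth

open CycKnuth

/-- any two words that are permutations of each other are
cyclic Knuth equivalent. -/
theorem stmt19 (w v : List ℕ+) (h : w.Perm v) : CyclicKnuthEquiv w v := by
  obtain ⟨s, hs, hE⟩ := to_sorted _ _ w [] rfl rfl List.Pairwise.nil
  obtain ⟨t, ht, hF⟩ := to_sorted _ _ v [] rfl rfl List.Pairwise.nil
  rw [List.append_nil] at hE hF
  have hp : s.Perm t := (ck_perm hE).symm.trans (h.trans (ck_perm hF))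
  have : s = t := hp.eq_of_pairwise (fun a b _ _ h1 h2 => le_antisymm h1 h2) hs ht
  subst this
  exact ck_trans hE (Relation.EqvGen.symm _ _ hF)
end
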